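/- Let N ≥ 2 and let ω_N denote the Lebesgue measure of the unit ball in ℝ^N. The following two statements are equivalent: (i) (Generalized Pólya conjecture) for every k ≥ 1 and every open set Ω ⊂ ℝ^N with 0 < |Ω| < ∞, λ_k(Ω) ≥ 16π⁴·(k/(ω_N|Ω|))^{4/N}; (ii) lim_{k→∞} λ_k*/k^{4/N} = 16π⁴/ω_N^{4/N}. -/

import Mathlib

open MeasureTheory Real Filter

noncomputable section

/-- The Laplacian of `u : ℝ^N → ℝ` as the sum of second derivatives along the
standard basis directions. -/
def lapN {N : ℕ} (u : EuclideanSpace ℝ (Fin N) → ℝ) :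
    EuclideanSpace ℝ (Fin N) → ℝ := fun x =>
  ∑ i : Fin N,
    fderiv ℝ (fun y => fderiv ℝ u y (EuclideanSpace.single i 1)) x
      (EuclideanSpace.single i 1)

/-- Admissible test functions on `Ω ⊆ ℝ^N`: smooth, compactly supported in `Ω`. -/
def AdmN {N : ℕ} (Ω : Set (EuclideanSpace ℝ (Fin N)))
    (u : EuclideanSpace ℝ (Fin N) → ℝ) : Prop :=
  ContDiff ℝ (⊤ : ℕ∞) u ∧ HasCompactSupport u ∧ tsupport u ⊆ Ω

/-- `k`-th Dirichlet eigenvalue of the biharmonic operator on `Ω ⊆ ℝ^N`: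
infimum over linearly independent `k`-tuples of admissible functions of the
maximum of the Rayleigh quotient over nonzero linear combinations. -/
def lamkN (N k : ℕ) (Ω : Set (EuclideanSpace ℝ (Fin N))) : ℝ :=
  sInf { μ | ∃ u : Fin k → (EuclideanSpace ℝ (Fin N) → ℝ),
    (∀ i, AdmN Ω (u i)) ∧ LinearIndependent ℝ u ∧
    μ = sSup { r | ∃ c : Fin k → ℝ, c ≠ 0 ∧
      r = (∫ x, (lapN (fun y => ∑ i, c i * u i y) x) ^ 2) /
          (∫ x, (∑ i, c i * u i x) ^ 2) } }

/-- `λ_k* = inf { λ_k(Ω) : Ω ⊆ ℝ^N open, |Ω| = 1 }`. -/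
def lamStar (N k : ℕ) : ℝ :=
  sInf { μ | ∃ Ω : Set (EuclideanSpace ℝ (Fin N)),
    IsOpen Ω ∧ volume Ω = 1 ∧ μ = lamkN N k Ω }

/-- `ω_N`: the Lebesgue measure of the unit ball in `ℝ^N`. -/
def omegaBall (N : ℕ) : ℝ :=
  (volume (Metric.ball (0 : EuclideanSpace ℝ (Fin N)) 1)).toReal

/-! (ii) ⇒ (i): disjoint scaled copies of `Ω`, `j` of them with total volume `1`, carry `j k` test
functions with a common Rayleigh bound, whence `λ_{jk}* ≤ (j |Ω|) ^ (4 / N) λ_k(Ω)`. Divide by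
`(j k) ^ (4 / N)` and let `j → ∞`. (Room for disjoint copies exists once `Ω` is replaced by a
bounded part of it that carries almost optimal test functions.)

(i) ⇒ (ii): the inequality for `|Ω| = 1` is the lower bound. The upper bound is tested on the unit
cube with products of the functions `sin² (π t) sin (π (q + 2) t)`. Extended by zero they are `C²`,
and on the cube they are finite sums of products of sines; if all frequencies lie in a ball of
radius `R`, Parseval's identity bounds their Rayleigh quotients by `(π R) ^ 4`. Counting lattice
points in that ball, up to a shift of bounded size, gives the constant of Weyl's law. Mollification
makes these functions smooth and compactly supported in a slightly larger cube. -/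

/-! ### The Laplacian -/

section Calculus

variable {E F : Type*} [NormedAddCommGroup E] [NormedSpace ℝ E]
  [NormedAddCommGroup F] [NormedSpace ℝ F]

lemma contDiff_fderiv_apply_const {u : E → F} {m n : WithTop ℕ∞} (hu : ContDiff ℝ n u)
    (hmn : m + 1 ≤ n) (v : E) : ContDiff ℝ m fun x => fderiv ℝ u x v :=
  (hu.fderiv_right hmn).clm_apply contDiff_const

lemma fderiv_comp_smul_sub (u : E → F) (s : ℝ) (b x : E) :
    fderiv ℝ (fun y => u (s • y - b)) x = s • fderiv ℝ u (s • x - b) := by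
  rw [fderiv_comp_smul (f := fun y => u (y - b)), fderiv_comp_sub]

lemma fderiv_sum_mul {ι : Type*} [Fintype ι] {u : ι → E → ℝ} {x : E}
    (hu : ∀ i, DifferentiableAt ℝ (u i) x) (c : ι → ℝ) (v : E) :
    fderiv ℝ (fun y => ∑ i, c i * u i y) x v = ∑ i, c i * fderiv ℝ (u i) x v := by
  rw [fderiv_fun_sum fun i _ => (hu i).const_mul _]
  simp [fderiv_const_mul (hu _)]

end Calculus

section Laplacian

variable {N : ℕ}

local notation "𝔼" => EuclideanSpace ℝ (Fin N)

lemma lapN_congr {u v : 𝔼 → ℝ} {x : 𝔼} (h : u =ᶠ[nhds x] v) : lapN u x = lapN v x := by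
  refine Finset.sum_congr rfl fun i _ => ?_
  have hpartial : (fun y => fderiv ℝ u y (EuclideanSpace.single i 1)) =ᶠ[nhds x]
      fun y => fderiv ℝ v y (EuclideanSpace.single i 1) := by
    filter_upwards [h.fderiv (𝕜 := ℝ)] with y hy
    rw [hy]
  rw [hpartial.fderiv_eq]

lemma lapN_zero (x : 𝔼) : lapN (fun _ : 𝔼 => 0) x = 0 := by
  simp [lapN]

lemma tsupport_lapN_subset (u : 𝔼 → ℝ) : tsupport (lapN u) ⊆ tsupport u := by
  refine closure_minimal (fun x hx => ?_) (isClosed_tsupport u)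
  by_contra hxu
  exact hx ((lapN_congr (notMem_tsupport_iff_eventuallyEq.1 hxu)).trans (lapN_zero x))

lemma hasCompactSupport_lapN {u : 𝔼 → ℝ} (hu : HasCompactSupport u) :
    HasCompactSupport (lapN u) :=
  hu.mono' (subset_closure.trans (tsupport_lapN_subset u))

lemma contDiff_one_partial {u : 𝔼 → ℝ} (hu : ContDiff ℝ 2 u) (v : 𝔼) :
    ContDiff ℝ 1 fun x => fderiv ℝ u x v :=
  contDiff_fderiv_apply_const hu one_add_one_eq_two.le v

lemma continuous_lapN {u : 𝔼 → ℝ} (hu : ContDiff ℝ 2 u) : Continuous (lapN u) :=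
  continuous_finsetSum _ fun _ _ =>
    (contDiff_fderiv_apply_const (contDiff_one_partial hu _) (zero_add 1).le _).continuous

lemma lapN_sum_mul {ι : Type*} [Fintype ι] {u : ι → 𝔼 → ℝ} (hu : ∀ i, ContDiff ℝ 2 (u i))
    (c : ι → ℝ) (x : 𝔼) :
    lapN (fun y => ∑ i, c i * u i y) x = ∑ i, c i * lapN (u i) x := by
  have hdiff (i : ι) (y : 𝔼) : DifferentiableAt ℝ (u i) y := (hu i).differentiable two_ne_zero y
  have hdiff' (v : 𝔼) (i : ι) : DifferentiableAt ℝ (fun y => fderiv ℝ (u i) y v) x :=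
    (contDiff_one_partial (hu i) v).differentiable one_ne_zero x
  simp only [lapN, fderiv_sum_mul (hdiff · _), fderiv_sum_mul (hdiff' _), Finset.mul_sum]
  exact Finset.sum_comm

lemma lapN_comp_smul_sub (u : 𝔼 → ℝ) (s : ℝ) (b x : 𝔼) :
    lapN (fun y => u (s • y - b)) x = s ^ 2 * lapN u (s • x - b) := by
  have hpartial (w : 𝔼 → ℝ) (v y : 𝔼) :
      fderiv ℝ (fun z => w (s • z - b)) y v = s * fderiv ℝ w (s • y - b) v := by
    simp [fderiv_comp_smul_sub]
  have hconst (w : 𝔼 → ℝ) (v y : 𝔼) : fderiv ℝ (fun z => s * w z) y v = s * fderiv ℝ w y v :=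
    congrArg (· v) (congrFun (fderiv_const_smul_field (𝕜 := ℝ) (f := w) s) y)
  have hpartial' (v : 𝔼) : fderiv ℝ (fun z => fderiv ℝ u (s • z - b) v) x v =
      s * fderiv ℝ (fun y => fderiv ℝ u y v) (s • x - b) v :=
    hpartial (fun y => fderiv ℝ u y v) v x
  simp only [lapN, hpartial, hconst, hpartial', Finset.mul_sum, sq, mul_assoc]

end Laplacian

/-! ### Gram matrices and quadratic forms -/

section Gram

open Matrix

variable {X ι : Type*} [MeasurableSpace X] [Fintype ι]

/-- The Gram matrix of a family of real functions for the `L²(μ)` inner product. It turns the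
numerator and the denominator of the Rayleigh quotient into quadratic forms in the coefficients. -/
def l2Gram (μ : Measure X) (f : ι → X → ℝ) : Matrix ι ι ℝ :=
  Matrix.of fun i j => ∫ x, f i x * f j x ∂μ

lemma integral_sq_sum_mul {μ : Measure X} {f : ι → X → ℝ} (hf : ∀ i, MemLp (f i) 2 μ)
    (c : ι → ℝ) : ∫ x, (∑ i, c i * f i x) ^ 2 ∂μ = c ⬝ᵥ l2Gram μ f *ᵥ c := by
  have hint (i j : ι) : Integrable (fun x => c i * (f i x * f j x * c j)) μ :=
    (((hf i).integrable_mul (hf j)).mul_const _).const_mul _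
  have hexpand (x : X) :
      (∑ i, c i * f i x) ^ 2 = ∑ i, ∑ j, c i * (f i x * f j x * c j) := by
    rw [sq, Finset.sum_mul_sum]
    exact Finset.sum_congr rfl fun i _ => Finset.sum_congr rfl fun j _ => by ring
  simp only [hexpand, dotProduct, mulVec, l2Gram, of_apply, Finset.mul_sum]
  rw [integral_finsetSum _ fun i _ => integrable_finsetSum _ fun j _ => hint i j]
  refine Finset.sum_congr rfl fun i _ => ?_
  rw [integral_finsetSum _ fun j _ => hint i j]
  exact Finset.sum_congr rfl fun j _ => by rw [integral_const_mul, integral_mul_const]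

lemma dotProduct_mulVec_pos_of_sphere {A : Matrix ι ι ℝ}
    (hA : ∀ c ∈ Metric.sphere (0 : ι → ℝ) 1, 0 < c ⬝ᵥ A *ᵥ c) {c : ι → ℝ} (hc : c ≠ 0) :
    0 < c ⬝ᵥ A *ᵥ c := by
  have hnorm : 0 < ‖c‖ := norm_pos_iff.2 hc
  have h := hA (‖c‖⁻¹ • c) (by simp [norm_smul, hnorm.ne'])
  rw [mulVec_smul, smul_dotProduct, dotProduct_smul, smul_eq_mul, smul_eq_mul] at h
  exact pos_of_mul_pos_right (pos_of_mul_pos_right h (by positivity)) (by positivity)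

lemma eventually_dotProduct_mulVec_pos {A : Matrix ι ι ℝ}
    (hA : ∀ c : ι → ℝ, c ≠ 0 → 0 < c ⬝ᵥ A *ᵥ c) :
    ∀ᶠ B in nhds A, ∀ c : ι → ℝ, c ≠ 0 → 0 < c ⬝ᵥ B *ᵥ c := by
  have hcont : Continuous fun p : Matrix ι ι ℝ × (ι → ℝ) => p.2 ⬝ᵥ p.1 *ᵥ p.2 :=
    continuous_snd.dotProduct (continuous_fst.matrix_mulVec continuous_snd)
  have hsphere : ∀ᶠ B in nhds A, ∀ c ∈ Metric.sphere (0 : ι → ℝ) 1, 0 < c ⬝ᵥ B *ᵥ c :=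
    (isCompact_sphere _ _).eventually_forall_of_forall_eventually fun c hc =>
      hcont.continuousAt.eventually_const_lt (hA c (ne_zero_of_mem_unit_sphere ⟨c, hc⟩))
  exact hsphere.mono fun B hB c hc => dotProduct_mulVec_pos_of_sphere hB hc

lemma exists_dotProduct_mulVec_le (A : Matrix ι ι ℝ) {B : Matrix ι ι ℝ}
    (hB : ∀ c : ι → ℝ, c ≠ 0 → 0 < c ⬝ᵥ B *ᵥ c) :
    ∃ M : ℝ, ∀ c : ι → ℝ, c ⬝ᵥ A *ᵥ c ≤ M * (c ⬝ᵥ B *ᵥ c) := by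
  have hlim : Tendsto (fun t : ℝ => B - t • A) (nhdsWithin 0 (Set.Ioi 0)) (nhds B) := by
    have : Continuous fun t : ℝ => B - t • A := by fun_prop
    simpa using (this.tendsto 0).mono_left nhdsWithin_le_nhds
  obtain ⟨t, ht, ht0⟩ :=
    ((hlim.eventually (eventually_dotProduct_mulVec_pos hB)).and self_mem_nhdsWithin).exists
  refine ⟨t⁻¹, fun c => ?_⟩
  rcases eq_or_ne c 0 with rfl | hc
  · simp
  have h := ht c hc
  rw [sub_mulVec, dotProduct_sub, smul_mulVec, dotProduct_smul, smul_eq_mul, sub_pos] at h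
  exact (le_inv_mul_iff₀ ht0).2 h.le

end Gram

section GramIndependence

open Matrix

variable {X ι : Type*} [MeasurableSpace X] [Fintype ι] {μ : Measure X} {f : ι → X → ℝ}

lemma linearIndependent_of_l2Gram_pos (hf : ∀ i, MemLp (f i) 2 μ)
    (hpos : ∀ c : ι → ℝ, c ≠ 0 → 0 < c ⬝ᵥ l2Gram μ f *ᵥ c) : LinearIndependent ℝ f := by
  refine Fintype.linearIndependent_iff.2 fun c hc => ?_
  have hzero (x : X) : ∑ i, c i * f i x = 0 := by simpa using congrFun hc x
  by_contra! h
  have hint := hpos c (Function.ne_iff.2 h)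
  rw [← integral_sq_sum_mul hf] at hint
  simp [hzero] at hint

lemma l2Gram_pos_of_linearIndependent [TopologicalSpace X] [μ.IsOpenPosMeasure]
    (hcont : ∀ i, Continuous (f i)) (hf : ∀ i, MemLp (f i) 2 μ) (hli : LinearIndependent ℝ f)
    {c : ι → ℝ} (hc : c ≠ 0) : 0 < c ⬝ᵥ l2Gram μ f *ᵥ c := by
  obtain ⟨x, hx⟩ : ∃ x, ∑ i, c i * f i x ≠ 0 := by
    by_contra! h
    refine hc (funext (Fintype.linearIndependent_iff.1 hli c (funext fun x => ?_)))
    simpa using h x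
  rw [← integral_sq_sum_mul hf]
  exact integral_pos_of_integrable_nonneg_nonzero (by fun_prop)
    (memLp_finsetSum _ fun i _ => (hf i).const_mul (c i)).integrable_sq
    (fun x => sq_nonneg _) (pow_ne_zero 2 hx)

end GramIndependence

/-! ### The variational characterization -/

section Variational

variable {N k : ℕ} {ι : Type*} [Fintype ι]

local notation "𝔼" => EuclideanSpace ℝ (Fin N)

/-- The largest Rayleigh quotient of the nonzero linear combinations of the family `u`: the
quantity minimized in `lamkN`. -/
def rayleighMax (u : ι → 𝔼 → ℝ) : ℝ :=
  sSup { r | ∃ c : ι → ℝ, c ≠ 0 ∧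
    r = (∫ x, (lapN (fun y => ∑ i, c i * u i y) x) ^ 2) / (∫ x, (∑ i, c i * u i x) ^ 2) }

/-- `Λ` bounds the Rayleigh quotients of the linear combinations of the family `u`, written
without division. -/
def HasRayleighBound (u : ι → 𝔼 → ℝ) (Λ : ℝ) : Prop :=
  ∀ c : ι → ℝ, ∫ x, (lapN (fun y => ∑ i, c i * u i y) x) ^ 2 ≤ Λ * ∫ x, (∑ i, c i * u i x) ^ 2

/-- Test functions on `Ω` of class `C²`; `AdmN` asks for smooth ones. -/
structure AdmC2 (Ω : Set 𝔼) (u : 𝔼 → ℝ) : Prop where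
  contDiff : ContDiff ℝ 2 u
  hasCompactSupport : HasCompactSupport u
  tsupport_subset : tsupport u ⊆ Ω

lemma AdmN.admC2 {Ω : Set 𝔼} {u : 𝔼 → ℝ} (hu : AdmN Ω u) : AdmC2 Ω u :=
  ⟨hu.1.of_le (WithTop.coe_le_coe.2 le_top), hu.2.1, hu.2.2⟩

lemma AdmC2.memLp {Ω : Set 𝔼} {u : 𝔼 → ℝ} (hu : AdmC2 Ω u) : MemLp u 2 volume :=
  hu.contDiff.continuous.memLp_of_hasCompactSupport hu.hasCompactSupport

lemma AdmC2.memLp_lapN {Ω : Set 𝔼} {u : 𝔼 → ℝ} (hu : AdmC2 Ω u) : MemLp (lapN u) 2 volume :=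
  (continuous_lapN hu.contDiff).memLp_of_hasCompactSupport
    (hasCompactSupport_lapN hu.hasCompactSupport)

lemma rayleighMax_nonneg (u : ι → 𝔼 → ℝ) : 0 ≤ rayleighMax u := by
  refine Real.sSup_nonneg ?_
  rintro _ ⟨c, -, rfl⟩
  exact div_nonneg (integral_nonneg fun x => sq_nonneg _) (integral_nonneg fun x => sq_nonneg _)

lemma HasRayleighBound.rayleighMax_le {u : ι → 𝔼 → ℝ} {Λ : ℝ} (hu : HasRayleighBound u Λ)
    (hΛ : 0 ≤ Λ) : rayleighMax u ≤ Λ := by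
  refine Real.sSup_le ?_ hΛ
  rintro _ ⟨c, -, rfl⟩
  exact div_le_of_le_mul₀ (integral_nonneg fun x => sq_nonneg _) hΛ (hu c)

lemma HasRayleighBound.mono {u : ι → 𝔼 → ℝ} {Λ Λ' : ℝ} (hu : HasRayleighBound u Λ)
    (hΛ : Λ ≤ Λ') : HasRayleighBound u Λ' := fun c =>
  (hu c).trans (mul_le_mul_of_nonneg_right hΛ (integral_nonneg fun _ => sq_nonneg _))

lemma zero_mem_lowerBounds_rayleighMax (k : ℕ) (Ω : Set 𝔼) :
    0 ∈ lowerBounds { μ | ∃ u : Fin k → (𝔼 → ℝ),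
      (∀ i, AdmN Ω (u i)) ∧ LinearIndependent ℝ u ∧ μ = rayleighMax u } := by
  rintro _ ⟨u, -, -, rfl⟩
  exact rayleighMax_nonneg u

lemma lamkN_nonneg (k : ℕ) (Ω : Set 𝔼) : 0 ≤ lamkN N k Ω :=
  Real.sInf_nonneg (zero_mem_lowerBounds_rayleighMax k Ω)

lemma lamkN_le_rayleighMax {Ω : Set 𝔼} {u : Fin k → 𝔼 → ℝ} (hu : ∀ i, AdmN Ω (u i))
    (hli : LinearIndependent ℝ u) : lamkN N k Ω ≤ rayleighMax u :=
  csInf_le ⟨0, zero_mem_lowerBounds_rayleighMax k Ω⟩ ⟨u, hu, hli, rfl⟩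

lemma lamStar_le {Ω : Set 𝔼} (hΩ : IsOpen Ω) (hvol : volume Ω = 1) :
    lamStar N k ≤ lamkN N k Ω := by
  refine csInf_le ⟨0, ?_⟩ ⟨Ω, hΩ, hvol, rfl⟩
  rintro _ ⟨Ω', -, -, rfl⟩
  exact lamkN_nonneg k Ω'

lemma integral_lapN_sq_sum_mul {Ω : Set 𝔼} {u : ι → 𝔼 → ℝ} (hu : ∀ i, AdmC2 Ω (u i))
    (c : ι → ℝ) : ∫ x, (lapN (fun y => ∑ i, c i * u i y) x) ^ 2 =
      c ⬝ᵥ (l2Gram volume fun i => lapN (u i)).mulVec c := by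
  simp only [lapN_sum_mul fun i => (hu i).contDiff]
  exact integral_sq_sum_mul (fun i => (hu i).memLp_lapN) c

lemma hasRayleighBound_iff_l2Gram {Ω : Set 𝔼} {u : ι → 𝔼 → ℝ} (hu : ∀ i, AdmC2 Ω (u i)) {Λ : ℝ} :
    HasRayleighBound u Λ ↔ ∀ c : ι → ℝ, c ⬝ᵥ (l2Gram volume fun i => lapN (u i)).mulVec c ≤
      Λ * (c ⬝ᵥ (l2Gram volume u).mulVec c) := by
  simp only [HasRayleighBound, integral_lapN_sq_sum_mul hu,
    integral_sq_sum_mul fun i => (hu i).memLp]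

lemma hasRayleighBound_rayleighMax {Ω : Set 𝔼} {u : ι → 𝔼 → ℝ} (hu : ∀ i, AdmC2 Ω (u i))
    (hli : LinearIndependent ℝ u) : HasRayleighBound u (rayleighMax u) := by
  have hpos {c : ι → ℝ} (hc : c ≠ 0) : 0 < c ⬝ᵥ (l2Gram volume u).mulVec c :=
    l2Gram_pos_of_linearIndependent (fun i => (hu i).contDiff.continuous)
      (fun i => (hu i).memLp) hli hc
  obtain ⟨M, hM⟩ := exists_dotProduct_mulVec_le (l2Gram volume fun i => lapN (u i)) fun _ => hpos
  have hbdd : HasRayleighBound u M := (hasRayleighBound_iff_l2Gram hu).2 hM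
  intro c
  rcases eq_or_ne c 0 with rfl | hc
  · simp [lapN_zero]
  have hint : 0 < ∫ x, (∑ i, c i * u i x) ^ 2 := by
    rw [integral_sq_sum_mul fun i => (hu i).memLp]
    exact hpos hc
  rw [← div_le_iff₀ hint]
  refine le_csSup ⟨M, ?_⟩ ⟨c, hc, rfl⟩
  rintro _ ⟨d, hd, rfl⟩
  refine (div_le_iff₀ ?_).2 (hbdd d)
  rw [integral_sq_sum_mul fun i => (hu i).memLp]
  exact hpos hd

lemma HasRayleighBound.comp_embedding {κ : Type*} [Fintype κ] {u : ι → 𝔼 → ℝ} {Λ : ℝ}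
    (hu : HasRayleighBound u Λ) (e : κ ↪ ι) : HasRayleighBound (fun i => u (e i)) Λ := by
  intro c
  have hsum (x : 𝔼) : ∑ i, c i * u (e i) x = ∑ j, Function.extend e c 0 j * u j x :=
    Fintype.sum_of_injective e e.injective _ _
      (fun j hj => by rw [Function.extend_apply' _ _ _ (by simpa using hj)]; simp)
      fun i => by rw [e.injective.extend_apply]
  simp only [hsum]
  exact hu _

end Variational

section Existence

lemma linearIndependent_pow_succ {K X : Type*} [Field K] {f : X → K}
    (hf : (Set.range f).Infinite) : LinearIndependent K fun i : ℕ => f ^ (i + 1) := by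
  have hinj : Function.Injective (Polynomial.aeval f : Polynomial K →ₐ[K] X → K) := by
    refine (injective_iff_map_eq_zero _).2 fun p hp => Polynomial.eq_zero_of_infinite_isRoot p
      (hf.mono ?_)
    rintro _ ⟨x, rfl⟩
    simpa [Polynomial.aeval_pi_apply] using congrFun hp x
  have hpow := (Polynomial.basisMonomials K).linearIndependent.map_injOn
    (Polynomial.aeval f : Polynomial K →ₐ[K] X → K).toLinearMap hinj.injOn
  simpa [Function.comp_def] using hpow.comp Nat.succ Nat.succ_injective

lemma infinite_range_of_hasCompactSupport {X : Type*} [TopologicalSpace X] [PreconnectedSpace X]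
    [NoncompactSpace X] {f : X → ℝ} (hf : Continuous f) (hs : HasCompactSupport f) {x : X}
    (hx : f x ≠ 0) : (Set.range f).Infinite := by
  obtain ⟨y, hy⟩ : ∃ y, y ∉ tsupport f := by
    by_contra! h
    exact noncompact_univ X (Set.eq_univ_of_forall h ▸ hs.isCompact)
  exact (isPreconnected_range hf).infinite_of_nontrivial
    ⟨f x, ⟨x, rfl⟩, f y, ⟨y, rfl⟩, by rwa [image_eq_zero_of_notMem_tsupport hy]⟩

variable {N : ℕ} [NeZero N]

local notation "𝔼" => EuclideanSpace ℝ (Fin N)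

lemma exists_linearIndependent_admN (k : ℕ) {Ω : Set 𝔼} (hΩ : IsOpen Ω) (hne : Ω.Nonempty) :
    ∃ u : Fin k → (𝔼 → ℝ), (∀ i, AdmN Ω (u i)) ∧ LinearIndependent ℝ u := by
  obtain ⟨x, hx⟩ := hne
  obtain ⟨f, hfΩ, hfc, hf, -, hfx⟩ :=
    exists_contDiff_tsupport_subset (n := (⊤ : ℕ∞)) (hΩ.mem_nhds hx)
  have hsupp (i : ℕ) : Function.support (f ^ (i + 1)) ⊆ Function.support f :=
    fun y hy h => hy (by simp [h])
  refine ⟨fun i => f ^ ((i : ℕ) + 1), fun i => ⟨hf.pow _, hfc.mono (hsupp i),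
    (closure_mono (hsupp i)).trans hfΩ⟩, ?_⟩
  exact (linearIndependent_pow_succ (infinite_range_of_hasCompactSupport hf.continuous hfc
    (hfx.trans_ne one_ne_zero))).comp Fin.val Fin.val_injective

lemma exists_hasRayleighBound_of_lamkN_lt {k : ℕ} {Ω : Set 𝔼} (hΩ : IsOpen Ω)
    (hne : Ω.Nonempty) {Λ : ℝ} (h : lamkN N k Ω < Λ) :
    ∃ u : Fin k → (𝔼 → ℝ), (∀ i, AdmN Ω (u i)) ∧ LinearIndependent ℝ u ∧
      HasRayleighBound u Λ := by
  obtain ⟨u₀, hu₀, hli₀⟩ := exists_linearIndependent_admN k hΩ hne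
  obtain ⟨_, ⟨u, hu, hli, rfl⟩, hlt⟩ :=
    exists_lt_of_csInf_lt (by exact ⟨_, u₀, hu₀, hli₀, rfl⟩) h
  exact ⟨u, hu, hli, (hasRayleighBound_rayleighMax (fun i => (hu i).admC2) hli).mono hlt.le⟩

end Existence

/-! ### Mollification -/

section Mollify

variable {E F : Type*} [NormedAddCommGroup E] [NormedSpace ℝ E]
  [NormedAddCommGroup F] [NormedSpace ℝ F]

/-- A sequence of smooth bump functions at the origin whose supports shrink to a point. -/
def shrinkingBump (E : Type*) [NormedAddCommGroup E] (n : ℕ) : ContDiffBump (0 : E) where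
  rIn := 1 / ((n : ℝ) + 1) / 2
  rOut := 1 / ((n : ℝ) + 1)
  rIn_pos := by positivity
  rIn_lt_rOut := half_lt_self (by positivity)

variable [HasContDiffBump E] [MeasurableSpace E]

/-- The mollification of `u` at scale `1 / (n + 1)`: its convolution with a normalized smooth
bump function. -/
def mollify (μ : Measure E) (n : ℕ) (u : E → F) : E → F :=
  convolution ((shrinkingBump E n).normed μ) u (ContinuousLinearMap.lsmul ℝ ℝ) μ

variable [FiniteDimensional ℝ E] [BorelSpace E] {μ : Measure E} {u : E → F}

lemma support_mollify_subset (μ : Measure E) [IsLocallyFiniteMeasure μ] [μ.IsOpenPosMeasure]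
    (n : ℕ) (u : E → F) :
    Function.support (mollify μ n u) ⊆ Metric.cthickening (1 / ((n : ℝ) + 1)) (tsupport u) := by
  refine (support_convolution_subset _).trans ?_
  rw [ContDiffBump.support_normed_eq]
  rintro _ ⟨a, ha, b, hb, rfl⟩
  refine Metric.mem_cthickening_of_dist_le _ b _ _ (subset_closure hb) ?_
  simpa [shrinkingBump] using (mem_ball_zero_iff.1 ha).le

lemma tsupport_mollify_subset (μ : Measure E) [IsLocallyFiniteMeasure μ] [μ.IsOpenPosMeasure]
    (n : ℕ) (u : E → F) :
    tsupport (mollify μ n u) ⊆ Metric.cthickening (1 / ((n : ℝ) + 1)) (tsupport u) :=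
  closure_minimal (support_mollify_subset μ n u) Metric.isClosed_cthickening

variable [μ.IsAddHaarMeasure]

lemma hasCompactSupport_mollify (n : ℕ) (hs : HasCompactSupport u) :
    HasCompactSupport (mollify μ n u) :=
  IsCompact.of_isClosed_subset hs.isCompact.cthickening (isClosed_tsupport _)
    (tsupport_mollify_subset μ n u)

lemma eventually_tsupport_mollify_subset {Ω : Set E} (hΩ : IsOpen Ω) (hs : HasCompactSupport u)
    (hsub : tsupport u ⊆ Ω) : ∀ᶠ n in atTop, tsupport (mollify μ n u) ⊆ Ω := by
  obtain ⟨δ, hδ, hδΩ⟩ := hs.isCompact.exists_cthickening_subset_open hΩ hsub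
  filter_upwards [(tendsto_one_div_add_atTop_nhds_zero_nat (𝕜 := ℝ)).eventually_lt_const hδ]
    with n hn
  exact (tsupport_mollify_subset μ n u).trans ((Metric.cthickening_mono hn.le _).trans hδΩ)

lemma norm_mollify_le (n : ℕ) {M : ℝ} (hM : ∀ x, ‖u x‖ ≤ M) (x : E) : ‖mollify μ n u x‖ ≤ M := by
  set φ := (shrinkingBump E n).normed μ
  calc ‖mollify μ n u x‖
    _ ≤ ∫ t, φ t * M ∂μ := by
        refine norm_integral_le_of_norm_le
          ((shrinkingBump E n).integrable_normed.mul_const M) (Eventually.of_forall fun t => ?_)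
        have hφ : 0 ≤ φ t := (shrinkingBump E n).nonneg_normed t
        rw [ContinuousLinearMap.lsmul_apply, norm_smul, Real.norm_of_nonneg hφ]
        exact mul_le_mul_of_nonneg_left (hM _) hφ
    _ = M := by rw [integral_mul_const, ContDiffBump.integral_normed, one_mul]

lemma contDiff_mollify (n : ℕ) (hu : Continuous u) :
    ContDiff ℝ (⊤ : ℕ∞) (mollify μ n u) :=
  (shrinkingBump E n).hasCompactSupport_normed.contDiff_convolution_left _
    (shrinkingBump E n).contDiff_normed hu.locallyIntegrable

lemma tendsto_mollify [CompleteSpace F] (hu : Continuous u) (x : E) :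
    Tendsto (fun n => mollify μ n u x) atTop (nhds (u x)) :=
  ContDiffBump.convolution_tendsto_right_of_continuous
    tendsto_one_div_add_atTop_nhds_zero_nat hu x

lemma mollify_sum {ι : Type*} (s : Finset ι) (n : ℕ) {u : ι → E → F}
    (hu : ∀ i ∈ s, Continuous (u i)) (x : E) :
    mollify μ n (fun y => ∑ i ∈ s, u i y) x = ∑ i ∈ s, mollify μ n (u i) x := by
  simp only [mollify, convolution_def, map_sum]
  exact integral_finsetSum _ fun i hi =>
    (shrinkingBump E n).hasCompactSupport_normed.convolutionExists_left _
      (shrinkingBump E n).continuous_normed (hu i hi).locallyIntegrable x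

lemma fderiv_mollify (n : ℕ) (hu : ContDiff ℝ 1 u) (hs : HasCompactSupport u) (x v : E) :
    fderiv ℝ (mollify μ n u) x v = mollify μ n (fun y => fderiv ℝ u y v) x := by
  have hφ : LocallyIntegrable ((shrinkingBump E n).normed μ) μ :=
    (shrinkingBump E n).continuous_normed.locallyIntegrable
  rw [mollify, (hs.hasFDerivAt_convolution_right (ContinuousLinearMap.lsmul ℝ ℝ) hφ hu x).fderiv]
  exact convolution_precompR_apply _ hφ (hs.fderiv (𝕜 := ℝ)) (hu.continuous_fderiv one_ne_zero) x v

lemma tendsto_integral_mollify_mul {u v : E → ℝ} (hu : Continuous u) (hv : Continuous v)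
    (hus : HasCompactSupport u) (hvs : HasCompactSupport v) :
    Tendsto (fun n => ∫ x, mollify μ n u x * mollify μ n v x ∂μ) atTop
      (nhds (∫ x, u x * v x ∂μ)) := by
  obtain ⟨A, hA⟩ := hus.exists_bound_of_continuous hu
  obtain ⟨B, hB⟩ := hvs.exists_bound_of_continuous hv
  set K := Metric.cthickening 1 (tsupport u)
  have hK : IsCompact K := hus.isCompact.cthickening
  have hsupp (n : ℕ) : Function.support (mollify μ n u) ⊆ K :=
    (support_mollify_subset μ n u).trans (Metric.cthickening_mono
      (div_le_one_of_le₀ (le_add_of_nonneg_left n.cast_nonneg) (by positivity)) _)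
  refine tendsto_integral_of_dominated_convergence (K.indicator fun _ => A * B) (fun n => ?_)
    ((integrable_indicator_iff hK.measurableSet).2 (integrableOn_const hK.measure_lt_top.ne))
    (fun n => Eventually.of_forall fun x => ?_)
    (Eventually.of_forall fun x => (tendsto_mollify hu x).mul (tendsto_mollify hv x))
  · exact ((contDiff_mollify n hu).continuous.mul
      (contDiff_mollify n hv).continuous).aestronglyMeasurable
  · by_cases hx : x ∈ K
    · rw [Set.indicator_of_mem hx, norm_mul]
      gcongr
      · exact (norm_nonneg _).trans (hA 0)
      · exact norm_mollify_le n hA x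
      · exact norm_mollify_le n hB x
    · simp [Function.notMem_support.1 fun h => hx (hsupp n h), hx]

end Mollify

section Regularization

variable {N k : ℕ}

local notation "𝔼" => EuclideanSpace ℝ (Fin N)

lemma lapN_mollify (n : ℕ) {u : 𝔼 → ℝ} (hu : ContDiff ℝ 2 u) (hs : HasCompactSupport u) :
    lapN (mollify volume n u) = mollify volume n (lapN u) := by
  ext x
  have hcont (v : 𝔼) : Continuous fun y => fderiv ℝ (fun z => fderiv ℝ u z v) y v :=
    (contDiff_fderiv_apply_const (contDiff_one_partial hu v) (zero_add 1).le v).continuous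
  unfold lapN
  rw [mollify_sum _ n fun i _ => hcont _]
  simp only [fderiv_mollify n (hu.of_le one_le_two) hs,
    fderiv_mollify n (contDiff_one_partial hu _) (hs.fderiv_apply (𝕜 := ℝ) _)]

lemma tendsto_l2Gram_mollify {ι : Type*} {u : ι → 𝔼 → ℝ} (hu : ∀ i, Continuous (u i))
    (hs : ∀ i, HasCompactSupport (u i)) :
    Tendsto (fun n => l2Gram volume fun i => mollify volume n (u i)) atTop
      (nhds (l2Gram volume u)) :=
  tendsto_pi_nhds.2 fun i => tendsto_pi_nhds.2 fun j =>
    tendsto_integral_mollify_mul (hu i) (hu j) (hs i) (hs j)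

-- The strict inequality between the two bounds is an open condition on the Gram matrices.
lemma eventually_hasRayleighBound_mollify {ι : Type*} [Fintype ι] {Ω : Set 𝔼} (hΩ : IsOpen Ω)
    {u : ι → 𝔼 → ℝ} (hu : ∀ i, AdmC2 Ω (u i)) (hli : LinearIndependent ℝ u) {Λ Λ' : ℝ}
    (hle : HasRayleighBound u Λ) (hΛ : Λ < Λ') :
    ∀ᶠ n in atTop, (∀ i, AdmN Ω (mollify volume n (u i))) ∧
      LinearIndependent ℝ (fun i => mollify volume n (u i)) ∧
      HasRayleighBound (fun i => mollify volume n (u i)) Λ' := by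
  have hcont (i : ι) := (hu i).contDiff.continuous
  have hs (i : ι) := (hu i).hasCompactSupport
  have hpos (c : ι → ℝ) (hc : c ≠ 0) : 0 < c ⬝ᵥ (l2Gram volume u).mulVec c :=
    l2Gram_pos_of_linearIndependent hcont (fun i => (hu i).memLp) hli hc
  have hnum : Tendsto (fun n => l2Gram volume fun i => lapN (mollify volume n (u i))) atTop
      (nhds (l2Gram volume fun i => lapN (u i))) := by
    simp only [lapN_mollify _ (hu _).contDiff (hs _)]
    exact tendsto_l2Gram_mollify (fun i => continuous_lapN (hu i).contDiff)
      fun i => hasCompactSupport_lapN (hs i)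
  have hden := tendsto_l2Gram_mollify hcont hs
  have hgap : ∀ c : ι → ℝ, c ≠ 0 →
      0 < c ⬝ᵥ (Λ' • l2Gram volume u - l2Gram volume fun i => lapN (u i)).mulVec c := by
    intro c hc
    have h := (hasRayleighBound_iff_l2Gram hu).1 hle c
    rw [Matrix.sub_mulVec, dotProduct_sub, Matrix.smul_mulVec, dotProduct_smul, smul_eq_mul,
      sub_pos]
    exact h.trans_lt (mul_lt_mul_of_pos_right hΛ (hpos c hc))
  filter_upwards [hden.eventually (eventually_dotProduct_mulVec_pos hpos),
    ((hden.const_smul Λ').sub hnum).eventually (eventually_dotProduct_mulVec_pos hgap),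
    eventually_all.2 fun i => eventually_tsupport_mollify_subset (μ := volume) hΩ (hs i)
      (hu i).tsupport_subset] with n hn hn' hsub
  have hadm (i : ι) : AdmN Ω (mollify volume n (u i)) :=
    ⟨contDiff_mollify n (hcont i), hasCompactSupport_mollify n (hs i), hsub i⟩
  refine ⟨hadm, linearIndependent_of_l2Gram_pos (fun i => (hadm i).admC2.memLp) hn,
    (hasRayleighBound_iff_l2Gram fun i => (hadm i).admC2).2 fun c => ?_⟩
  rcases eq_or_ne c 0 with rfl | hc
  · simp
  have h := hn' c hc
  rw [Matrix.sub_mulVec, dotProduct_sub, Matrix.smul_mulVec, dotProduct_smul, smul_eq_mul,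
    sub_pos] at h
  exact h.le

lemma lamkN_le_of_hasRayleighBound {ι : Type*} [Fintype ι] (hk : k ≤ Fintype.card ι) {Ω : Set 𝔼}
    (hΩ : IsOpen Ω) {u : ι → 𝔼 → ℝ} (hu : ∀ i, AdmC2 Ω (u i)) (hli : LinearIndependent ℝ u)
    {Λ : ℝ} (hΛ : 0 ≤ Λ) (hle : HasRayleighBound u Λ) : lamkN N k Ω ≤ Λ := by
  obtain ⟨e⟩ : Nonempty (Fin k ↪ ι) :=
    Function.Embedding.nonempty_of_card_le (by rwa [Fintype.card_fin])
  refine le_of_forall_gt_imp_ge_of_dense fun Λ' hΛ' => ?_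
  obtain ⟨n, hadm, hli', hle'⟩ := (eventually_hasRayleighBound_mollify hΩ hu hli hle hΛ').exists
  exact (lamkN_le_rayleighMax (fun i => hadm (e i)) (hli'.comp e e.injective)).trans
    ((hle'.comp_embedding e).rayleighMax_le (hΛ.trans hΛ'.le))

end Regularization

/-! ### Disjoint unions -/

section DisjointUnion

lemma linearIndependent_prod_of_disjoint {X ι κ : Type*} [Finite ι] [Finite κ]
    {f : ι → κ → X → ℝ} {Ω : ι → Set X} (hdisj : Pairwise fun l l' => Disjoint (Ω l) (Ω l'))
    (hf : ∀ l i, Function.support (f l i) ⊆ Ω l) (hli : ∀ l, LinearIndependent ℝ (f l)) :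
    LinearIndependent ℝ fun p : ι × κ => f p.1 p.2 := by
  cases nonempty_fintype ι
  cases nonempty_fintype κ
  refine Fintype.linearIndependent_iff.2 fun c hc p => ?_
  refine Fintype.linearIndependent_iff.1 (hli p.1) (fun i => c (p.1, i)) (funext fun x => ?_) p.2
  by_cases hx : x ∈ Ω p.1
  · have hother (l : ι) (hl : l ≠ p.1) (i : κ) : f l i x = 0 :=
      Function.notMem_support.1 fun h => Set.disjoint_left.1 (hdisj hl) (hf l i h) hx
    have hsum : ∑ l, ∑ i, c (l, i) * f l i x = 0 := by
      simpa [Fintype.sum_prod_type] using congrFun hc x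
    rw [Fintype.sum_eq_single p.1 fun l hl => by simp [hother l hl]] at hsum
    simpa using hsum
  · have hzero (i : κ) : f p.1 i x = 0 := Function.notMem_support.1 fun h => hx (hf p.1 i h)
    simp [hzero]

lemma integral_sq_sum_of_disjoint {X ι : Type*} [MeasurableSpace X] {μ : Measure X} [Fintype ι]
    {g : ι → X → ℝ} (hg : ∀ l, MemLp (g l) 2 μ) {Ω : ι → Set X}
    (hdisj : Pairwise fun l l' => Disjoint (Ω l) (Ω l'))
    (hsupp : ∀ l, Function.support (g l) ⊆ Ω l) :
    ∫ x, (∑ l, g l x) ^ 2 ∂μ = ∑ l, ∫ x, (g l x) ^ 2 ∂μ := by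
  have hcross (l l' : ι) (hl : l' ≠ l) (x : X) : g l x * g l' x = 0 := by
    by_contra h
    exact Set.disjoint_left.1 (hdisj hl) (hsupp l' (right_ne_zero_of_mul h))
      (hsupp l (left_ne_zero_of_mul h))
  have hsq (x : X) : (∑ l, g l x) ^ 2 = ∑ l, g l x ^ 2 := by
    simp only [sq, Finset.sum_mul_sum]
    exact Finset.sum_congr rfl fun l _ => Fintype.sum_eq_single l fun l' hl => hcross l l' hl x
  simp only [hsq]
  exact integral_finsetSum _ fun l _ => (hg l).integrable_sq

variable {N : ℕ}

local notation "𝔼" => EuclideanSpace ℝ (Fin N)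

lemma AdmC2.mono {Ω Ω' : Set 𝔼} {u : 𝔼 → ℝ} (hu : AdmC2 Ω u) (hΩ : Ω ⊆ Ω') : AdmC2 Ω' u :=
  ⟨hu.contDiff, hu.hasCompactSupport, hu.tsupport_subset.trans hΩ⟩

lemma AdmC2.sum_mul {ι : Type*} [Fintype ι] {Ω : Set 𝔼} {u : ι → 𝔼 → ℝ}
    (hu : ∀ i, AdmC2 Ω (u i)) (c : ι → ℝ) : AdmC2 Ω fun x => ∑ i, c i * u i x := by
  have hcompact : IsCompact (⋃ i, tsupport (u i)) :=
    isCompact_iUnion fun i => (hu i).hasCompactSupport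
  have hsupp : Function.support (fun x => ∑ i, c i * u i x) ⊆ ⋃ i, tsupport (u i) := fun x hx => by
    obtain ⟨i, -, hi⟩ := Finset.exists_ne_zero_of_sum_ne_zero hx
    exact Set.mem_iUnion.2 ⟨i, subset_closure (right_ne_zero_of_mul hi)⟩
  exact ⟨ContDiff.sum fun i _ => contDiff_const.mul (hu i).contDiff,
    .of_support_subset_isCompact hcompact hsupp,
    (closure_minimal hsupp hcompact.isClosed).trans
      (Set.iUnion_subset fun i => (hu i).tsupport_subset)⟩

lemma HasRayleighBound.prod_of_disjoint {ι κ : Type*} [Fintype ι] [Fintype κ] {Ω : ι → Set 𝔼}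
    (hdisj : Pairwise fun l l' => Disjoint (Ω l) (Ω l')) {u : ι → κ → 𝔼 → ℝ}
    (hu : ∀ l i, AdmC2 (Ω l) (u l i)) {Λ : ℝ} (hle : ∀ l, HasRayleighBound (u l) Λ) :
    HasRayleighBound (fun p : ι × κ => u p.1 p.2) Λ := by
  intro c
  set w : ι → 𝔼 → ℝ := fun l x => ∑ i, c (l, i) * u l i x
  have hw (l : ι) : AdmC2 (Ω l) (w l) := .sum_mul (hu l) _
  have hlap (x : 𝔼) :
      lapN (fun y => ∑ p : ι × κ, c p * u p.1 p.2 y) x = ∑ l, lapN (w l) x := by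
    rw [lapN_sum_mul fun p : ι × κ => (hu p.1 p.2).contDiff, Fintype.sum_prod_type]
    exact Finset.sum_congr rfl fun l _ => (lapN_sum_mul (fun i => (hu l i).contDiff) _ x).symm
  have hsum (x : 𝔼) : ∑ p : ι × κ, c p * u p.1 p.2 x = ∑ l, w l x := Fintype.sum_prod_type _
  have hsupp (l : ι) : tsupport (w l) ⊆ Ω l := (hw l).tsupport_subset
  calc ∫ x, (lapN (fun y => ∑ p : ι × κ, c p * u p.1 p.2 y) x) ^ 2
    _ = ∑ l, ∫ x, lapN (w l) x ^ 2 := by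
        simp only [hlap]
        exact integral_sq_sum_of_disjoint (fun l => (hw l).memLp_lapN) hdisj fun l =>
          subset_closure.trans ((tsupport_lapN_subset _).trans (hsupp l))
    _ ≤ ∑ l, Λ * ∫ x, w l x ^ 2 := Finset.sum_le_sum fun l _ => hle l _
    _ = Λ * ∫ x, (∑ p : ι × κ, c p * u p.1 p.2 x) ^ 2 := by
        simp only [hsum]
        rw [integral_sq_sum_of_disjoint (fun l => (hw l).memLp) hdisj fun l =>
          subset_closure.trans (hsupp l), Finset.mul_sum]

lemma lamkN_iUnion_le [NeZero N] {ι : Type*} [Fintype ι] {k : ℕ} {Ω : ι → Set 𝔼}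
    (hΩ : ∀ l, IsOpen (Ω l)) (hne : ∀ l, (Ω l).Nonempty)
    (hdisj : Pairwise fun l l' => Disjoint (Ω l) (Ω l')) {Λ : ℝ} (hΛ : 0 ≤ Λ)
    (hle : ∀ l, lamkN N k (Ω l) ≤ Λ) : lamkN N (Fintype.card ι * k) (⋃ l, Ω l) ≤ Λ := by
  refine le_of_forall_gt_imp_ge_of_dense fun Λ' hΛ' => ?_
  choose u hu hli hbound using fun l =>
    exists_hasRayleighBound_of_lamkN_lt (hΩ l) (hne l) ((hle l).trans_lt hΛ')
  have hadm (l : ι) (i : Fin k) : AdmC2 (Ω l) (u l i) := (hu l i).admC2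
  exact lamkN_le_of_hasRayleighBound (by simp) (isOpen_iUnion hΩ)
    (fun p : ι × Fin k => (hadm p.1 p.2).mono (Set.subset_iUnion Ω p.1))
    (linearIndependent_prod_of_disjoint hdisj
      (fun l i => subset_closure.trans (hadm l i).tsupport_subset) hli)
    (hΛ.trans hΛ'.le) (.prod_of_disjoint hdisj hadm hbound)

end DisjointUnion

/-! ### Scaled copies -/

section ScaledCopy

section NormedSpace

variable {E : Type*} [NormedAddCommGroup E] [NormedSpace ℝ E]

/-- The translated and rescaled copy `s⁻¹ • (Ω + b)` of `Ω`. -/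
def scaledCopy (s : ℝ) (b : E) (Ω : Set E) : Set E :=
  (fun x => s • x - b) ⁻¹' Ω

lemma isOpen_scaledCopy {Ω : Set E} (hΩ : IsOpen Ω) (s : ℝ) (b : E) :
    IsOpen (scaledCopy s b Ω) :=
  hΩ.preimage (by fun_prop)

lemma surjective_smul_sub {s : ℝ} (hs : s ≠ 0) (b : E) :
    Function.Surjective fun x : E => s • x - b :=
  fun y => ⟨s⁻¹ • (y + b), by simp [smul_inv_smul₀ hs]⟩

lemma exists_pairwise_disjoint_scaledCopy [Nontrivial E] {Ω : Set E}
    (hΩ : Bornology.IsBounded Ω) (s : ℝ) :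
    ∃ b : ℕ → E, Pairwise fun l l' => Disjoint (scaledCopy s (b l) Ω) (scaledCopy s (b l') Ω) := by
  obtain ⟨ρ, hρ, hball⟩ := hΩ.subset_ball_lt 0 0
  obtain ⟨e, he⟩ := exists_norm_eq E zero_le_one
  refine ⟨fun l => (2 * ρ * l) • e, fun l l' hl => Set.disjoint_left.2 fun x hx hx' => ?_⟩
  have hnorm := norm_sub_le (s • x - (2 * ρ * l') • e) (s • x - (2 * ρ * l) • e)
  rw [sub_sub_sub_cancel_left, ← sub_smul, ← mul_sub, norm_smul, he, mul_one, norm_mul,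
    Real.norm_of_nonneg (by positivity : 0 ≤ 2 * ρ)] at hnorm
  have hdist : (1 : ℝ) ≤ ‖(l : ℝ) - l'‖ := by
    have : (1 : ℤ) ≤ |(l : ℤ) - l'| := Int.one_le_abs (sub_ne_zero.2 (by exact_mod_cast hl))
    rw [Real.norm_eq_abs]
    exact_mod_cast this
  nlinarith [mem_ball_zero_iff.1 (hball hx), mem_ball_zero_iff.1 (hball hx')]

variable [FiniteDimensional ℝ E] [MeasurableSpace E] [BorelSpace E] (μ : Measure E)
  [μ.IsAddHaarMeasure]

lemma integral_comp_smul_sub {F : Type*} [NormedAddCommGroup F] [NormedSpace ℝ F] (f : E → F)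
    (s : ℝ) (b : E) :
    ∫ x, f (s • x - b) ∂μ = |(s ^ Module.finrank ℝ E)⁻¹| • ∫ x, f x ∂μ := by
  rw [Measure.integral_comp_smul μ (fun y => f (y - b)) s, integral_sub_right_eq_self f b]

lemma measure_scaledCopy {s : ℝ} (hs : s ≠ 0) (b : E) (Ω : Set E) :
    μ (scaledCopy s b Ω) = ENNReal.ofReal |(s ^ Module.finrank ℝ E)⁻¹| * μ Ω := by
  have h := Measure.addHaar_preimage_smul μ hs ((fun y => y - b) ⁻¹' Ω)
  simpa only [sub_eq_add_neg, measure_preimage_add_right, scaledCopy, Set.preimage_preimage]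
    using h

end NormedSpace

variable {N : ℕ}

local notation "𝔼" => EuclideanSpace ℝ (Fin N)

lemma AdmC2.comp_smul_sub {Ω : Set 𝔼} {u : 𝔼 → ℝ} (hu : AdmC2 Ω u) {s : ℝ} (hs : s ≠ 0) (b : 𝔼) :
    AdmC2 (scaledCopy s b Ω) fun x => u (s • x - b) :=
  ⟨hu.contDiff.comp (by fun_prop),
    hu.hasCompactSupport.comp_homeomorph
      ((Homeomorph.smulOfNeZero s hs).trans (Homeomorph.subRight b)),
    (tsupport_comp_subset_preimage u (by fun_prop)).trans (Set.preimage_mono hu.tsupport_subset)⟩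

lemma HasRayleighBound.comp_smul_sub {ι : Type*} [Fintype ι] {u : ι → 𝔼 → ℝ} {Λ : ℝ}
    (hu : HasRayleighBound u Λ) (s : ℝ) (b : 𝔼) :
    HasRayleighBound (fun i x => u i (s • x - b)) (s ^ 4 * Λ) := by
  intro c
  set w : 𝔼 → ℝ := fun x => ∑ i, c i * u i x
  set J := |(s ^ Module.finrank ℝ 𝔼)⁻¹|
  calc ∫ x, (lapN (fun y => w (s • y - b)) x) ^ 2
    _ = s ^ 4 * ∫ x, (lapN w (s • x - b)) ^ 2 := by
        rw [← integral_const_mul]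
        simp only [lapN_comp_smul_sub]
        congr with x
        ring
    _ = s ^ 4 * (J * ∫ x, lapN w x ^ 2) := by
        rw [integral_comp_smul_sub volume fun x => lapN w x ^ 2, smul_eq_mul]
    _ ≤ s ^ 4 * (J * (Λ * ∫ x, w x ^ 2)) := by
        gcongr
        exact hu c
    _ = s ^ 4 * Λ * ∫ x, w (s • x - b) ^ 2 := by
        rw [integral_comp_smul_sub volume fun x => w x ^ 2, smul_eq_mul]
        ring

variable [NeZero N]

lemma lamkN_scaledCopy_le {k : ℕ} {Ω : Set 𝔼} (hΩ : IsOpen Ω) (hne : Ω.Nonempty) {s : ℝ}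
    (hs : s ≠ 0) (b : 𝔼) : lamkN N k (scaledCopy s b Ω) ≤ s ^ 4 * lamkN N k Ω := by
  have hs4 : 0 < s ^ 4 := by positivity
  rw [← div_le_iff₀' hs4]
  refine le_of_forall_gt_imp_ge_of_dense fun Λ hΛ => (div_le_iff₀' hs4).2 ?_
  obtain ⟨u, hu, hli, hbound⟩ := exists_hasRayleighBound_of_lamkN_lt hΩ hne hΛ
  have hli' : LinearIndependent ℝ fun i x => u i (s • x - b) :=
    hli.map' (LinearMap.funLeft ℝ ℝ _) (LinearMap.ker_eq_bot.2
      (LinearMap.funLeft_injective_of_surjective ℝ ℝ _ (surjective_smul_sub hs b)))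
  exact lamkN_le_of_hasRayleighBound (by simp) (isOpen_scaledCopy hΩ s b)
    (fun i => (hu i).admC2.comp_smul_sub hs b) hli'
    (mul_nonneg hs4.le ((lamkN_nonneg k Ω).trans hΛ.le)) (hbound.comp_smul_sub s b)

lemma rpow_four_div {a : ℝ} (ha : 0 ≤ a) (b : ℝ) : a ^ (4 / b) = (a ^ (1 / b)) ^ 4 := by
  rw [← Real.rpow_mul_natCast ha]
  congr 1
  push_cast
  ring

lemma lamStar_mul_le_of_isBounded {j k : ℕ} (hj : j ≠ 0) {Ω : Set 𝔼} (hΩ : IsOpen Ω)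
    (hne : Ω.Nonempty) (hbdd : Bornology.IsBounded Ω) :
    lamStar N (j * k) ≤ (j * volume.real Ω) ^ ((4 : ℝ) / N) * lamkN N k Ω := by
  have hV : 0 < volume.real Ω :=
    ENNReal.toReal_pos (hΩ.measure_pos _ hne).ne' hbdd.measure_lt_top.ne
  set s : ℝ := (j * volume.real Ω) ^ (1 / N : ℝ) with hs_def
  have hs : 0 < s := by positivity
  have hsN : s ^ N = j * volume.real Ω := by
    rw [hs_def, one_div, Real.rpow_inv_natCast_pow (by positivity) (NeZero.ne N)]
  have hs4 : s ^ 4 = (j * volume.real Ω) ^ ((4 : ℝ) / N) :=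
    (rpow_four_div (by positivity) _).symm
  obtain ⟨b, hdisj⟩ := exists_pairwise_disjoint_scaledCopy hbdd s
  have hdisj' : Pairwise fun l l' : Fin j =>
      Disjoint (scaledCopy s (b l) Ω) (scaledCopy s (b l') Ω) :=
    fun l l' hl => hdisj (Fin.val_ne_of_ne hl)
  have hopen (l : Fin j) := isOpen_scaledCopy hΩ s (b l)
  have hvol : volume (⋃ l : Fin j, scaledCopy s (b l) Ω) = 1 := by
    rw [measure_iUnion hdisj' fun l => (hopen l).measurableSet, tsum_fintype]
    simp only [measure_scaledCopy volume hs.ne', finrank_euclideanSpace_fin, hsN,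
      Finset.sum_const, Finset.card_univ, Fintype.card_fin, nsmul_eq_mul]
    rw [← ofReal_measureReal hbdd.measure_lt_top.ne, ← ENNReal.ofReal_mul (abs_nonneg _),
      ← ENNReal.ofReal_natCast, ← ENNReal.ofReal_mul (by positivity), abs_of_pos (by positivity),
      ENNReal.ofReal_eq_one]
    field_simp
  calc lamStar N (j * k)
    _ ≤ lamkN N (j * k) (⋃ l : Fin j, scaledCopy s (b l) Ω) :=
        lamStar_le (isOpen_iUnion hopen) hvol
    _ ≤ s ^ 4 * lamkN N k Ω := by
        simpa only [Fintype.card_fin] using lamkN_iUnion_le hopen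
          (fun l => hne.preimage (surjective_smul_sub hs.ne' _)) hdisj'
          (mul_nonneg (by positivity) (lamkN_nonneg k Ω))
          fun l => lamkN_scaledCopy_le hΩ hne hs.ne' (b l)
    _ = _ := by rw [hs4]

lemma exists_isBounded_subset_lamkN_le {k : ℕ} {Ω : Set 𝔼} (hΩ : IsOpen Ω) (hne : Ω.Nonempty)
    {Λ : ℝ} (hΛ : lamkN N k Ω < Λ) : ∃ Ω' ⊆ Ω, IsOpen Ω' ∧ Ω'.Nonempty ∧
      Bornology.IsBounded Ω' ∧ lamkN N k Ω' ≤ Λ := by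
  obtain ⟨u, hu, hli, hbound⟩ := exists_hasRayleighBound_of_lamkN_lt hΩ hne hΛ
  obtain ⟨x, hx⟩ := hne
  have hbdd : Bornology.IsBounded (insert x (⋃ i, tsupport (u i))) :=
    ((isCompact_iUnion fun i => (hu i).2.1).insert x).isBounded
  obtain ⟨ρ, hρ⟩ := hbdd.subset_ball 0
  have hsupp (i : Fin k) : tsupport (u i) ⊆ Metric.ball 0 ρ :=
    ((Set.subset_iUnion _ i).trans (Set.subset_insert _ _)).trans hρ
  exact ⟨Ω ∩ Metric.ball 0 ρ, Set.inter_subset_left, hΩ.inter Metric.isOpen_ball,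
    ⟨x, hx, hρ (Set.mem_insert _ _)⟩, Metric.isBounded_ball.subset Set.inter_subset_right,
    (lamkN_le_rayleighMax (fun i => ⟨(hu i).1, (hu i).2.1,
      Set.subset_inter (hu i).2.2 (hsupp i)⟩) hli).trans
      (hbound.rayleighMax_le ((lamkN_nonneg k Ω).trans hΛ.le))⟩

lemma lamStar_mul_le {j k : ℕ} (hj : j ≠ 0) {Ω : Set 𝔼} (hΩ : IsOpen Ω) (hne : Ω.Nonempty)
    (hfin : volume Ω ≠ ⊤) :
    lamStar N (j * k) ≤ (j * volume.real Ω) ^ ((4 : ℝ) / N) * lamkN N k Ω := by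
  have hV : 0 < volume.real Ω := ENNReal.toReal_pos (hΩ.measure_pos _ hne).ne' hfin
  have hfactor : 0 < (j * volume.real Ω) ^ ((4 : ℝ) / N) := by positivity
  rw [← div_le_iff₀' hfactor]
  refine le_of_forall_gt_imp_ge_of_dense fun Λ hΛ => (div_le_iff₀' hfactor).2 ?_
  obtain ⟨Ω', hsub, hΩ', hne', hbdd, hle⟩ := exists_isBounded_subset_lamkN_le hΩ hne hΛ
  refine (lamStar_mul_le_of_isBounded hj hΩ' hne' hbdd).trans ?_
  gcongr
  exact lamkN_nonneg k Ω'

end ScaledCopy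

/-! ### Boxes and tensor products -/

section Box

variable {ι : Type*}

/-- The box `∏ i, s i`, as a subset of Euclidean space. -/
def box (s : ι → Set ℝ) : Set (EuclideanSpace ℝ ι) := {x | ∀ i, x i ∈ s i}

lemma box_eq_preimage (s : ι → Set ℝ) : box s = WithLp.ofLp ⁻¹' Set.univ.pi s := by
  ext x
  simp [box]

lemma box_mono {s t : ι → Set ℝ} (h : ∀ i, s i ⊆ t i) : box s ⊆ box t :=
  fun _ hx i => h i (hx i)

lemma isCompact_box {s : ι → Set ℝ} (hs : ∀ i, IsCompact (s i)) : IsCompact (box s) := by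
  rw [box_eq_preimage]
  exact (PiLp.homeomorph 2 fun _ : ι => ℝ).isCompact_preimage.2 (isCompact_univ_pi hs)

/-- The open unit cube `(0, 1)^ι`. -/
def unitCube (ι : Type*) : Set (EuclideanSpace ℝ ι) := box fun _ => Set.Ioo 0 1

/-- The closed unit cube `[0, 1]^ι`. -/
def closedUnitCube (ι : Type*) : Set (EuclideanSpace ℝ ι) := box fun _ => Set.Icc 0 1

lemma unitCube_subset_closedUnitCube : unitCube ι ⊆ closedUnitCube ι :=
  box_mono fun _ => Set.Ioo_subset_Icc_self

lemma isCompact_closedUnitCube : IsCompact (closedUnitCube ι) :=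
  isCompact_box fun _ => isCompact_Icc

lemma isOpen_box [Finite ι] {s : ι → Set ℝ} (hs : ∀ i, IsOpen (s i)) : IsOpen (box s) := by
  rw [box_eq_preimage]
  exact (isOpen_set_pi Set.finite_univ fun i _ => hs i).preimage (PiLp.continuous_ofLp 2 _)

lemma isOpen_unitCube [Finite ι] : IsOpen (unitCube ι) := isOpen_box fun _ => isOpen_Ioo

lemma measurableSet_box [Countable ι] {s : ι → Set ℝ} (hs : ∀ i, MeasurableSet (s i)) :
    MeasurableSet (box s) := by
  rw [box_eq_preimage]
  exact (MeasurableSet.univ_pi hs).preimage (WithLp.measurable_ofLp 2 _)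

variable [Fintype ι]

lemma volume_box {s : ι → Set ℝ} (hs : ∀ i, MeasurableSet (s i)) :
    volume (box s) = ∏ i, volume (s i) := by
  rw [box_eq_preimage, (PiLp.volume_preserving_ofLp ι).measure_preimage
    (MeasurableSet.univ_pi hs).nullMeasurableSet, volume_pi_pi]

lemma volume_unitCube : volume (unitCube ι) = 1 := by
  simp [unitCube, volume_box fun _ : ι => measurableSet_Ioo]

lemma volume_closedUnitCube : volume (closedUnitCube ι) = 1 := by
  simp [closedUnitCube, volume_box fun _ : ι => measurableSet_Icc]

lemma unitCube_ae_eq_closedUnitCube : unitCube ι =ᵐ[volume] closedUnitCube ι :=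
  ae_eq_of_subset_of_measure_ge unitCube_subset_closedUnitCube
    (volume_closedUnitCube.trans volume_unitCube.symm).le
    isOpen_unitCube.measurableSet.nullMeasurableSet (by simp [volume_closedUnitCube])

lemma setIntegral_unitCube_eq_integral {f : EuclideanSpace ℝ ι → ℝ}
    (hf : Function.support f ⊆ closedUnitCube ι) : ∫ x in unitCube ι, f x = ∫ x, f x := by
  rw [setIntegral_congr_set unitCube_ae_eq_closedUnitCube,
    setIntegral_eq_integral_of_forall_compl_eq_zero fun x hx =>
      Function.notMem_support.1 fun h => hx (hf h)]

/-- The function `x ↦ ∏ i, f i (x i)`. -/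
def tensorProd (f : ι → ℝ → ℝ) : EuclideanSpace ℝ ι → ℝ := fun x => ∏ i, f i (x i)

lemma contDiff_tensorProd {n : WithTop ℕ∞} {f : ι → ℝ → ℝ} (hf : ∀ i, ContDiff ℝ n (f i)) :
    ContDiff ℝ n (tensorProd f) :=
  contDiff_prod fun i _ => (hf i).comp (by fun_prop)

lemma tensorProd_mul (f g : ι → ℝ → ℝ) (x : EuclideanSpace ℝ ι) :
    tensorProd (fun i t => f i t * g i t) x = tensorProd f x * tensorProd g x :=
  Finset.prod_mul_distrib

lemma indicator_box_tensorProd (s : ι → Set ℝ) (f : ι → ℝ → ℝ) :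
    (box s).indicator (tensorProd f) = tensorProd fun i => (s i).indicator (f i) := by
  ext x
  by_cases hx : x ∈ box s
  · rw [Set.indicator_of_mem hx]
    exact Finset.prod_congr rfl fun i _ => (Set.indicator_of_mem (hx i) _).symm
  · rw [Set.indicator_of_notMem hx]
    obtain ⟨i, hi⟩ := not_forall.1 hx
    exact (Finset.prod_eq_zero (Finset.mem_univ i) (Set.indicator_of_notMem hi _)).symm

lemma integral_tensorProd (f : ι → ℝ → ℝ) : ∫ x, tensorProd f x = ∏ i, ∫ t, f i t := by
  rw [← integral_fintype_prod_volume_eq_prod]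
  exact (PiLp.volume_preserving_ofLp ι).integral_comp
    (MeasurableEquiv.toLp 2 (ι → ℝ)).symm.measurableEmbedding fun y => ∏ i, f i (y i)

lemma setIntegral_box_tensorProd {s : ι → Set ℝ} (hs : ∀ i, MeasurableSet (s i))
    (f : ι → ℝ → ℝ) : ∫ x in box s, tensorProd f x = ∏ i, ∫ t in s i, f i t := by
  rw [← integral_indicator (measurableSet_box hs), indicator_box_tensorProd, integral_tensorProd]
  simp only [integral_indicator (hs _)]

lemma tensorProd_update [DecidableEq ι] (f : ι → ℝ → ℝ) (i : ι) (g : ℝ → ℝ)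
    (x : EuclideanSpace ℝ ι) : tensorProd (Function.update f i g) x =
      g (x i) * ∏ j ∈ Finset.univ.erase i, f j (x j) := by
  rw [tensorProd, ← Finset.mul_prod_erase _ _ (Finset.mem_univ i), Function.update_self]
  exact congrArg _ (Finset.prod_congr rfl fun j hj => by
    rw [Function.update_of_ne (Finset.ne_of_mem_erase hj)])

lemma tensorProd_update_const_mul [DecidableEq ι] (f : ι → ℝ → ℝ) (i : ι) (a : ℝ)
    (x : EuclideanSpace ℝ ι) :
    tensorProd (Function.update f i fun t => a * f i t) x = a * tensorProd f x := by
  rw [tensorProd_update, mul_assoc, tensorProd, Finset.mul_prod_erase _ (fun j => f j (x j))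
    (Finset.mem_univ i)]

lemma fderiv_tensorProd_single [DecidableEq ι] {f : ι → ℝ → ℝ} {f' : ℝ → ℝ} {i : ι}
    (hf : ∀ j, Differentiable ℝ (f j)) (hfi : ∀ t, HasDerivAt (f i) (f' t) t)
    (x : EuclideanSpace ℝ ι) :
    fderiv ℝ (tensorProd f) x (EuclideanSpace.single i 1) =
      tensorProd (Function.update f i f') x := by
  have hcoord (j : ι) : HasFDerivAt (fun x : EuclideanSpace ℝ ι => f j (x j))
      (deriv (f j) (x j) • (EuclideanSpace.proj j : EuclideanSpace ℝ ι →L[ℝ] ℝ)) x :=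
    (hf j (x j)).hasDerivAt.comp_hasFDerivAt x
      (EuclideanSpace.proj j : EuclideanSpace ℝ ι →L[ℝ] ℝ).hasFDerivAt
  have hprod : HasFDerivAt (tensorProd f) _ x :=
    HasFDerivAt.finsetProd (u := Finset.univ) fun j _ => hcoord j
  rw [hprod.fderiv, _root_.sum_apply, Fintype.sum_eq_single i fun j hj => by simp [hj],
    tensorProd_update]
  simp [(hfi (x i)).deriv, mul_comm]

end Box

lemma lapN_tensorProd_of_eigenfunction {N : ℕ} {f f' : Fin N → ℝ → ℝ} {a : Fin N → ℝ}
    (hf : ∀ i t, HasDerivAt (f i) (f' i t) t) (hf' : ∀ i t, HasDerivAt (f' i) (a i * f i t) t)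
    (x : EuclideanSpace ℝ (Fin N)) :
    lapN (tensorProd f) x = (∑ i, a i) * tensorProd f x := by
  have hdiff (j : Fin N) : Differentiable ℝ (f j) := fun t => (hf j t).differentiableAt
  have hdiff' (i j : Fin N) : Differentiable ℝ (Function.update f i (f' i) j) := by
    rcases eq_or_ne j i with rfl | hj
    · rw [Function.update_self]
      exact fun t => (hf' j t).differentiableAt
    · simpa [hj] using hdiff j
  rw [lapN, Finset.sum_mul]
  refine Finset.sum_congr rfl fun i _ => ?_
  simp only [fderiv_tensorProd_single hdiff (hf i)]
  rw [fderiv_tensorProd_single (f' := fun t => a i * f i t) (hdiff' i) (by simpa using hf' i),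
    Function.update_idem, tensorProd_update_const_mul]

/-! ### Sine modes -/

section SineMode

/-- The Dirichlet eigenfunction `t ↦ sin (π n t)` of the unit interval. -/
def sineMode (n : ℕ) (t : ℝ) : ℝ := sin (π * n * t)

lemma sineMode_zero (n : ℕ) : sineMode n 0 = 0 := by simp [sineMode]

lemma sineMode_one (n : ℕ) : sineMode n 1 = 0 := by simp [sineMode, mul_comm π, sin_nat_mul_pi]

lemma hasDerivAt_sineMode (n : ℕ) (t : ℝ) :
    HasDerivAt (sineMode n) (π * n * cos (π * n * t)) t :=
  ((hasDerivAt_id t).const_mul (π * n)).sin.congr_deriv (by simp [mul_comm])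

lemma hasDerivAt_deriv_sineMode (n : ℕ) (t : ℝ) :
    HasDerivAt (fun t => π * n * cos (π * n * t)) (-(π * n) ^ 2 * sineMode n t) t :=
  (((hasDerivAt_id t).const_mul (π * n)).cos.const_mul (π * n)).congr_deriv (by
    simp only [sineMode, id]
    ring)

lemma contDiff_sineMode {n : WithTop ℕ∞} (k : ℕ) : ContDiff ℝ n (sineMode k) := by
  unfold sineMode
  fun_prop

lemma integral_cos_pi_mul_int {n : ℤ} (hn : n ≠ 0) : ∫ t in (0 : ℝ)..1, cos (π * n * t) = 0 := by
  rw [intervalIntegral.integral_comp_mul_left (fun t => cos t)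
    (mul_ne_zero pi_ne_zero (Int.cast_ne_zero.2 hn)), integral_cos]
  simp [mul_comm π, sin_int_mul_pi]

lemma setIntegral_sineMode_mul {m n : ℕ} (hm : m ≠ 0) :
    ∫ t in Set.Ioo (0 : ℝ) 1, sineMode m t * sineMode n t = if m = n then 1 / 2 else 0 := by
  have hprod (t : ℝ) : sineMode m t * sineMode n t =
      1 / 2 * (cos (π * ((m - n : ℤ) : ℝ) * t) - cos (π * ((m + n : ℤ) : ℝ) * t)) := by
    push_cast
    rw [mul_sub π, mul_add π, sub_mul, add_mul, cos_sub, cos_add, sineMode, sineMode]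
    ring
  rw [← integral_Ioc_eq_integral_Ioo, ← intervalIntegral.integral_of_le zero_le_one]
  simp only [hprod]
  rw [intervalIntegral.integral_const_mul, intervalIntegral.integral_sub
    (Continuous.intervalIntegrable (by fun_prop) _ _)
    (Continuous.intervalIntegrable (by fun_prop) _ _),
    integral_cos_pi_mul_int (n := m + n) (by omega)]
  split_ifs with hmn
  · simp [hmn]
  · rw [integral_cos_pi_mul_int (n := m - n) (by omega)]
    simp

end SineMode

section SineProd

variable {ι κ : Type*} [Fintype ι]

/-- The product `x ↦ ∏ i, sin (π (m i) (x i))`, a Dirichlet eigenfunction of the unit cube. -/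
def sineProd (m : ι → ℕ) : EuclideanSpace ℝ ι → ℝ := tensorProd fun i => sineMode (m i)

lemma contDiff_sineProd {n : WithTop ℕ∞} (m : ι → ℕ) : ContDiff ℝ n (sineProd m) :=
  contDiff_tensorProd fun _ => contDiff_sineMode _

lemma memLp_sineProd (m : ι → ℕ) : MemLp (sineProd m) 2 (volume.restrict (unitCube ι)) := by
  have hcont : Continuous (sineProd m) := (contDiff_sineProd (n := 0) m).continuous
  exact (memLp_two_iff_integrable_sq hcont.aestronglyMeasurable).2
    (((hcont.pow 2).continuousOn.integrableOn_compact isCompact_closedUnitCube).mono_set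
      unitCube_subset_closedUnitCube)

lemma setIntegral_sineProd_mul {m n : ι → ℕ} (hm : ∀ i, m i ≠ 0) :
    ∫ x in unitCube ι, sineProd m x * sineProd n x =
      if m = n then (1 / 2) ^ Fintype.card ι else 0 := by
  simp only [sineProd, ← tensorProd_mul]
  rw [unitCube, setIntegral_box_tensorProd fun _ => measurableSet_Ioo]
  simp only [setIntegral_sineMode_mul (hm _)]
  split_ifs with hmn
  · simp [hmn]
  · obtain ⟨i, hi⟩ := Function.ne_iff.1 hmn
    exact Finset.prod_eq_zero (Finset.mem_univ i) (if_neg hi)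

lemma l2Gram_sineProd [DecidableEq κ] {m : κ → ι → ℕ} (hm : ∀ p i, m p i ≠ 0)
    (hinj : Function.Injective m) :
    l2Gram (volume.restrict (unitCube ι)) (fun p => sineProd (m p)) =
      Matrix.diagonal fun _ => (1 / 2) ^ Fintype.card ι := by
  classical
  ext p q
  simp [l2Gram, setIntegral_sineProd_mul (hm p), Matrix.diagonal_apply, hinj.eq_iff]

lemma setIntegral_sq_sum_sineProd [Fintype κ] {m : κ → ι → ℕ} (hm : ∀ p i, m p i ≠ 0)
    (hinj : Function.Injective m) (a : κ → ℝ) :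
    ∫ x in unitCube ι, (∑ p, a p * sineProd (m p) x) ^ 2 =
      (1 / 2) ^ Fintype.card ι * ∑ p, a p ^ 2 := by
  classical
  rw [integral_sq_sum_mul fun p => memLp_sineProd (m p), l2Gram_sineProd hm hinj]
  simp only [dotProduct, Matrix.mulVec_diagonal, Finset.mul_sum]
  exact Finset.sum_congr rfl fun p _ => by ring

end SineProd

section SineSum

variable {N : ℕ} {κ : Type*} [Fintype κ]

lemma lapN_sineProd (m : Fin N → ℕ) (x : EuclideanSpace ℝ (Fin N)) :
    lapN (sineProd m) x = -(π ^ 2 * ∑ i, (m i : ℝ) ^ 2) * sineProd m x := by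
  rw [sineProd, lapN_tensorProd_of_eigenfunction (fun i => hasDerivAt_sineMode (m i))
    fun i => hasDerivAt_deriv_sineMode (m i)]
  simp only [mul_pow, Finset.mul_sum, Finset.sum_neg_distrib]

lemma setIntegral_lapN_sq_sum_sineProd_le {m : κ → Fin N → ℕ} (hm : ∀ p i, m p i ≠ 0)
    (hinj : Function.Injective m) {R : ℝ} (hR : ∀ p, ∑ i, (m p i : ℝ) ^ 2 ≤ R ^ 2) (a : κ → ℝ) :
    ∫ x in unitCube (Fin N), (lapN (fun y => ∑ p, a p * sineProd (m p) y) x) ^ 2 ≤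
      (π * R) ^ 4 * ∫ x in unitCube (Fin N), (∑ p, a p * sineProd (m p) x) ^ 2 := by
  have hlap (x : EuclideanSpace ℝ (Fin N)) : lapN (fun y => ∑ p, a p * sineProd (m p) y) x =
      ∑ p, (a p * -(π ^ 2 * ∑ i, (m p i : ℝ) ^ 2)) * sineProd (m p) x := by
    simp only [lapN_sum_mul fun p => contDiff_sineProd (m p), lapN_sineProd, mul_assoc]
  simp only [hlap, setIntegral_sq_sum_sineProd hm hinj]
  rw [mul_left_comm]
  refine mul_le_mul_of_nonneg_left ?_ (by positivity)
  rw [Finset.mul_sum]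
  refine Finset.sum_le_sum fun p _ => ?_
  have hR4 : (∑ i, (m p i : ℝ) ^ 2) ^ 2 ≤ (R ^ 2) ^ 2 := by
    gcongr
    exact hR p
  calc (a p * -(π ^ 2 * ∑ i, (m p i : ℝ) ^ 2)) ^ 2
    _ = π ^ 4 * a p ^ 2 * (∑ i, (m p i : ℝ) ^ 2) ^ 2 := by ring
    _ ≤ π ^ 4 * a p ^ 2 * (R ^ 2) ^ 2 := by gcongr
    _ = (π * R) ^ 4 * a p ^ 2 := by ring

end SineSum

/-! ### Extension by zero -/

section Indicator

variable {s : Set ℝ} {f : ℝ → ℝ}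

lemma hasDerivAt_indicator {f' : ℝ → ℝ} {t : ℝ} (hf : HasDerivAt f (f' t) t)
    (h0 : t ∈ frontier s → f t = 0 ∧ f' t = 0) :
    HasDerivAt (s.indicator f) (s.indicator f' t) t := by
  by_cases ht : t ∈ frontier s
  · obtain ⟨hft, hft'⟩ := h0 ht
    rw [hft', hasDerivAt_iff_isLittleO] at hf
    rw [Set.indicator_apply_eq_zero.2 fun _ => hft', hasDerivAt_iff_isLittleO,
      Set.indicator_apply_eq_zero.2 fun _ => hft]
    simp only [hft, smul_zero, sub_zero] at hf ⊢
    exact (Asymptotics.isBigO_of_le _ (norm_indicator_le_norm_self f)).trans_isLittleO hf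
  by_cases hts : t ∈ s
  · have hnhds : s ∈ nhds t := mem_interior_iff_mem_nhds.1 <| by
      by_contra h
      exact ht ⟨subset_closure hts, h⟩
    rw [Set.indicator_of_mem hts]
    exact hf.congr_of_eventuallyEq (Set.eqOn_indicator.eventuallyEq_of_mem hnhds)
  · have hnhds : sᶜ ∈ nhds t := mem_interior_iff_mem_nhds.1 <| by
      rw [interior_compl]
      exact fun h => ht ⟨h, fun h' => hts (interior_subset h')⟩
    rw [Set.indicator_of_notMem hts]
    exact (hasDerivAt_const t (0 : ℝ)).congr_of_eventuallyEq
      (Set.eqOn_indicator'.eventuallyEq_of_mem hnhds)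

lemma contDiff_indicator {n : ℕ} (hf : ContDiff ℝ n f)
    (h0 : ∀ t ∈ frontier s, ∀ m ≤ n, iteratedDeriv m f t = 0) : ContDiff ℝ n (s.indicator f) := by
  induction n generalizing f with
  | zero =>
    exact contDiff_zero.2 (continuous_indicator (fun t ht => by simpa using h0 t ht 0 le_rfl)
      hf.continuous.continuousOn)
  | succ n ih =>
    have hderiv (t : ℝ) : HasDerivAt (s.indicator f) (s.indicator (deriv f) t) t :=
      hasDerivAt_indicator (hf.differentiable (by simp) t).hasDerivAt fun ht =>
        ⟨by simpa using h0 t ht 0 (by simp), by simpa using h0 t ht 1 (by simp)⟩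
    push_cast at hf ⊢
    rw [contDiff_succ_iff_deriv] at hf ⊢
    rw [funext fun t => (hderiv t).deriv]
    refine ⟨fun t => (hderiv t).differentiableAt, by simp, ih hf.2.2 fun t ht m hm => ?_⟩
    rw [← iteratedDeriv_succ']
    exact h0 t ht (m + 1) (by omega)

end Indicator

/-! ### Clamped modes -/

section ClampedMode

/-- The function `sin² (π t) sin (π (q + 2) t)`. It vanishes to third order at the end points of
the unit interval, and is a combination of the sine modes `q`, `q + 2` and `q + 4`. -/
def clampedSine (q : ℕ) (t : ℝ) : ℝ := sin (π * t) ^ 2 * sineMode (q + 2) t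

/-- The coefficients of `clampedSine q` in the sine modes `q`, `q + 2` and `q + 4`. -/
def clampedCoeff : Fin 3 → ℝ := ![-1 / 4, 1 / 2, -1 / 4]

lemma clampedSine_eq_sum (q : ℕ) (t : ℝ) :
    clampedSine q t = ∑ j, clampedCoeff j * sineMode (q + 2 * j) t := by
  have hlow : π * (q : ℝ) * t = π * (q + 2 : ℕ) * t - 2 * (π * t) := by push_cast; ring
  have hhigh : π * (q + 4 : ℕ) * t = π * (q + 2 : ℕ) * t + 2 * (π * t) := by push_cast; ring
  simp only [Fin.sum_univ_three, clampedSine, clampedCoeff, sineMode, Matrix.cons_val,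
    Fin.val_zero, Fin.val_one, Fin.val_two, mul_zero, add_zero, mul_one, Nat.reduceMul, hlow, hhigh,
    sin_sub, sin_add, sin_sq_eq_half_sub]
  ring

lemma contDiff_clampedSine {n : WithTop ℕ∞} (q : ℕ) : ContDiff ℝ n (clampedSine q) :=
  ContDiff.mul (by fun_prop) (contDiff_sineMode _)

lemma deriv_clampedSine_eq_zero (q : ℕ) {t : ℝ} (ht : sin (π * t) = 0) :
    deriv (clampedSine q) t = 0 := by
  have hsin : HasDerivAt (fun t => sin (π * t)) (cos (π * t) * (π * 1)) t :=
    ((hasDerivAt_id t).const_mul π).sin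
  have h : HasDerivAt (clampedSine q) _ t := (hsin.pow 2).mul (hasDerivAt_sineMode (q + 2) t)
  rw [h.deriv]
  simp [ht]

lemma deriv_deriv_clampedSine (q : ℕ) (t : ℝ) : deriv (deriv (clampedSine q)) t =
    ∑ j : Fin 3, clampedCoeff j * (-(π * (q + 2 * j : ℕ)) ^ 2 * sineMode (q + 2 * j) t) := by
  have hderiv : deriv (clampedSine q) = fun t => ∑ j : Fin 3, clampedCoeff j *
      (π * (q + 2 * j : ℕ) * cos (π * (q + 2 * j : ℕ) * t)) := by
    rw [funext (clampedSine_eq_sum q)]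
    exact funext fun t => (HasDerivAt.fun_sum (u := Finset.univ) fun (j : Fin 3) _ =>
      (hasDerivAt_sineMode (q + 2 * j) t).const_mul (clampedCoeff j)).deriv
  rw [hderiv]
  exact (HasDerivAt.fun_sum (u := Finset.univ) fun (j : Fin 3) _ =>
    (hasDerivAt_deriv_sineMode (q + 2 * j) t).const_mul (clampedCoeff j)).deriv

/-- The extension by zero of `clampedSine q` from the unit interval. -/
def clampedMode (q : ℕ) : ℝ → ℝ := (Set.Icc (0 : ℝ) 1).indicator (clampedSine q)

lemma contDiff_clampedMode (q : ℕ) : ContDiff ℝ 2 (clampedMode q) := by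
  refine contDiff_indicator (n := 2) (contDiff_clampedSine q) fun t ht m hm => ?_
  rw [frontier_Icc zero_le_one] at ht
  have hsin : sin (π * t) = 0 := by rcases ht with rfl | rfl <;> simp
  have hmode (n : ℕ) : sineMode n t = 0 := by
    rcases ht with rfl | rfl
    exacts [sineMode_zero n, sineMode_one n]
  interval_cases m
  · simp [clampedSine, hsin]
  · rw [iteratedDeriv_one, deriv_clampedSine_eq_zero q hsin]
  · simp [iteratedDeriv_succ, deriv_deriv_clampedSine, hmode]

end ClampedMode

section ClampedProd

variable {ι κ : Type*} [Fintype ι]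

/-- The product of the clamped modes with indices `q`, which vanishes outside the unit cube. -/
def clampedProd (q : ι → ℕ) : EuclideanSpace ℝ ι → ℝ := tensorProd fun i => clampedMode (q i)

lemma contDiff_clampedProd (q : ι → ℕ) : ContDiff ℝ 2 (clampedProd q) :=
  contDiff_tensorProd fun _ => contDiff_clampedMode _

lemma clampedProd_eq_indicator (q : ι → ℕ) :
    clampedProd q = (closedUnitCube ι).indicator (tensorProd fun i => clampedSine (q i)) :=
  (indicator_box_tensorProd _ _).symm

lemma tsupport_clampedProd_subset (q : ι → ℕ) : tsupport (clampedProd q) ⊆ closedUnitCube ι := by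
  rw [clampedProd_eq_indicator]
  exact closure_minimal Set.support_indicator_subset isCompact_closedUnitCube.isClosed

lemma admC2_clampedProd {N : ℕ} (q : Fin N → ℕ) :
    AdmC2 (closedUnitCube (Fin N)) (clampedProd q) :=
  ⟨contDiff_clampedProd q, isCompact_closedUnitCube.of_isClosed_subset (isClosed_tsupport _)
    (tsupport_clampedProd_subset q), tsupport_clampedProd_subset q⟩

lemma clampedProd_of_mem {q : ι → ℕ} {x : EuclideanSpace ℝ ι} (hx : x ∈ closedUnitCube ι) :
    clampedProd q x = tensorProd (fun i => clampedSine (q i)) x := by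
  rw [clampedProd_eq_indicator, Set.indicator_of_mem hx]

lemma linearIndependent_clampedProd [Finite κ] {q : κ → ι → ℕ} (hq : Function.Injective q) :
    LinearIndependent ℝ fun p => clampedProd (q p) := by
  cases nonempty_fintype κ
  refine Fintype.linearIndependent_iff.2 fun c hc => ?_
  set m : κ → ι → ℕ := fun p i => q p i + 2
  have hm : Function.Injective m :=
    fun p p' h => hq (funext fun i => Nat.add_right_cancel (congrFun h i))
  have hfactor (x : EuclideanSpace ℝ ι) (hx : x ∈ unitCube ι) :
      ∑ p, c p * sineProd (m p) x = 0 := by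
    have hpos : tensorProd (fun _ t => sin (π * t) ^ 2) x ≠ 0 :=
      Finset.prod_ne_zero_iff.2 fun i _ => pow_ne_zero 2 (sin_pos_of_pos_of_lt_pi
        (mul_pos pi_pos (hx i).1) (mul_lt_of_lt_one_right pi_pos (hx i).2)).ne'
    have hsum : ∑ p, c p * clampedProd (q p) x = 0 := by simpa using congrFun hc x
    have hmul (p : κ) : clampedProd (q p) x =
        tensorProd (fun _ t => sin (π * t) ^ 2) x * sineProd (m p) x :=
      (clampedProd_of_mem (unitCube_subset_closedUnitCube hx)).trans (tensorProd_mul _ _ x)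
    simp only [hmul, mul_left_comm (c _), ← Finset.mul_sum] at hsum
    exact (mul_eq_zero.1 hsum).resolve_left hpos
  have hparseval := setIntegral_sq_sum_sineProd (fun p i => by simp [m]) hm c
  rw [setIntegral_eq_zero_of_forall_eq_zero fun x hx => by simp [hfactor x hx]] at hparseval
  have hsq : ∑ p, c p ^ 2 = 0 := (mul_eq_zero.1 hparseval.symm).resolve_left (by positivity)
  exact fun p => pow_eq_zero_iff two_ne_zero |>.1
    ((Finset.sum_eq_zero_iff_of_nonneg fun p _ => sq_nonneg _).1 hsq p (Finset.mem_univ p))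

end ClampedProd

/-! ### The eigenvalues of domains containing the unit cube -/

section Freqs

variable {N : ℕ} {d R : ℝ}

local notation "𝔼" => EuclideanSpace ℝ (Fin N)

/-- The multi-indices `m` with positive entries whose translate by `d` in every coordinate lies in
the closed ball of radius `R`. The bound on the entries only makes finiteness apparent. -/
def freqs (N : ℕ) (d R : ℝ) : Finset (Fin N → ℕ) :=
  {m ∈ Fintype.piFinset fun _ : Fin N => Finset.Icc 1 ⌊R⌋₊ | ∑ i, ((m i : ℝ) + d) ^ 2 ≤ R ^ 2}

lemma mem_freqs (hd : 0 ≤ d) (hR : 0 ≤ R) {m : Fin N → ℕ} :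
    m ∈ freqs N d R ↔ (∀ i, m i ≠ 0) ∧ ∑ i, ((m i : ℝ) + d) ^ 2 ≤ R ^ 2 := by
  simp only [freqs, Finset.mem_filter, Fintype.mem_piFinset, Finset.mem_Icc,
    ← Nat.one_le_iff_ne_zero]
  refine ⟨fun h => ⟨fun i => (h.1 i).1, h.2⟩, fun h => ⟨fun i => ⟨h.1 i, Nat.le_floor ?_⟩, h.2⟩⟩
  have hsq : ((m i : ℝ) + d) ^ 2 ≤ R ^ 2 :=
    (Finset.single_le_sum (f := fun i => ((m i : ℝ) + d) ^ 2) (fun j _ => sq_nonneg _)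
      (Finset.mem_univ i)).trans h.2
  linarith [abs_le_of_sq_le_sq' hsq hR]

lemma add_two_mul_mem_freqs (hR : 0 ≤ R) {q : Fin N → ℕ} (hq : q ∈ freqs N 4 R)
    (J : Fin N → Fin 3) : (fun i => q i + 2 * (J i : ℕ)) ∈ freqs N 0 R := by
  rw [mem_freqs (by norm_num) hR] at hq
  rw [mem_freqs le_rfl hR]
  refine ⟨fun i => by have := hq.1 i; omega, hq.2.trans' (Finset.sum_le_sum fun i _ => ?_)⟩
  have hJ : ((J i : ℕ) : ℝ) ≤ 2 := by exact_mod_cast Nat.lt_succ_iff.1 (J i).isLt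
  push_cast
  exact pow_le_pow_left₀ (by positivity) (by linarith) 2

lemma tensorProd_clampedSine_mem_span (hR : 0 ≤ R) {q : Fin N → ℕ} (hq : q ∈ freqs N 4 R) :
    tensorProd (fun i => clampedSine (q i)) ∈
      Submodule.span ℝ (Set.range fun m : freqs N 0 R => sineProd (m : Fin N → ℕ)) := by
  have hexpand : tensorProd (fun i => clampedSine (q i)) =
      ∑ J : Fin N → Fin 3, (∏ i, clampedCoeff (J i)) • sineProd fun i => q i + 2 * (J i : ℕ) := by
    ext x
    simp only [tensorProd, clampedSine_eq_sum, Finset.prod_univ_sum, Fintype.piFinset_univ,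
      Finset.prod_mul_distrib, Finset.sum_apply, Pi.smul_apply, smul_eq_mul, sineProd]
  rw [hexpand]
  exact Submodule.sum_mem _ fun J _ => Submodule.smul_mem _ _
    (Submodule.subset_span ⟨⟨_, add_two_mul_mem_freqs hR hq J⟩, rfl⟩)

lemma exists_sum_sineProd_eqOn (hR : 0 ≤ R) (c : freqs N 4 R → ℝ) : ∃ a : freqs N 0 R → ℝ,
    ∀ x ∈ closedUnitCube (Fin N), ∑ q, c q * clampedProd q.1 x = ∑ m, a m * sineProd m.1 x := by
  obtain ⟨a, ha⟩ := (Submodule.mem_span_range_iff_exists_fun ℝ).1 (Submodule.sum_mem _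
    fun (q : freqs N 4 R) _ => Submodule.smul_mem _ (c q) (tensorProd_clampedSine_mem_span hR q.2))
  refine ⟨a, fun x hx => ?_⟩
  simp only [clampedProd_of_mem hx]
  simpa using (congrFun ha x).symm

lemma hasRayleighBound_clampedProd (hR : 0 ≤ R) :
    HasRayleighBound (fun q : freqs N 4 R => clampedProd q.1) ((π * R) ^ 4) := by
  intro c
  set w : 𝔼 → ℝ := fun x => ∑ q : freqs N 4 R, c q * clampedProd q.1 x
  have hw : AdmC2 (closedUnitCube (Fin N)) w := AdmC2.sum_mul (fun q => admC2_clampedProd _) c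
  obtain ⟨a, ha⟩ := exists_sum_sineProd_eqOn hR c
  set v : 𝔼 → ℝ := fun x => ∑ m, a m * sineProd m.1 x
  have hwv : Set.EqOn w v (unitCube (Fin N)) := fun x hx => ha x (unitCube_subset_closedUnitCube hx)
  have hlap : Set.EqOn (lapN w) (lapN v) (unitCube (Fin N)) := fun x hx =>
    lapN_congr (hwv.eventuallyEq_of_mem (isOpen_unitCube.mem_nhds hx))
  have hint {f g : 𝔼 → ℝ} (hf : tsupport f ⊆ closedUnitCube (Fin N))
      (hfg : Set.EqOn f g (unitCube (Fin N))) :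
      ∫ x, f x ^ 2 = ∫ x in unitCube (Fin N), g x ^ 2 := by
    rw [← setIntegral_unitCube_eq_integral]
    · exact setIntegral_congr_fun isOpen_unitCube.measurableSet fun x hx => by simp only [hfg hx]
    · exact fun x hx => hf (subset_tsupport f fun h => hx (by simp [h]))
  rw [hint hw.tsupport_subset hwv, hint ((tsupport_lapN_subset w).trans hw.tsupport_subset) hlap]
  have hmem (m : freqs N 0 R) := (mem_freqs le_rfl hR).1 m.2
  exact setIntegral_lapN_sq_sum_sineProd_le (fun m => (hmem m).1) Subtype.val_injective
    (fun m => by simpa using (hmem m).2) a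

lemma lamkN_le_of_card_freqs {k : ℕ} (hR : 0 ≤ R) (hk : k ≤ (freqs N 4 R).card) {Ω : Set 𝔼}
    (hΩ : IsOpen Ω) (hcube : closedUnitCube (Fin N) ⊆ Ω) : lamkN N k Ω ≤ (π * R) ^ 4 :=
  lamkN_le_of_hasRayleighBound (by simpa using hk) hΩ (fun q => (admC2_clampedProd _).mono hcube)
    (linearIndependent_clampedProd Subtype.val_injective) (by positivity)
    (hasRayleighBound_clampedProd hR)

end Freqs

/-! ### Counting lattice points -/

section Counting

variable {N k : ℕ} {R : ℝ}

local notation "𝔼" => EuclideanSpace ℝ (Fin N)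

lemma volume_abs_preimage_Ico_le (a b : ℝ) :
    volume (abs ⁻¹' Set.Ico a b) ≤ 2 * ENNReal.ofReal (b - a) := by
  have hsubset : abs ⁻¹' Set.Ico a b ⊆ Set.Ioc (-b) (-a) ∪ Set.Ico a b := fun t ht => by
    obtain ⟨hat, htb⟩ : a ≤ |t| ∧ |t| < b := ht
    rcases abs_cases t with ⟨h, -⟩ | ⟨h, -⟩
    · exact Or.inr ⟨by linarith, by linarith⟩
    · exact Or.inl ⟨by linarith, by linarith⟩
  refine (measure_mono hsubset).trans ((measure_union_le _ _).trans_eq ?_)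
  rw [Real.volume_Ioc, Real.volume_Ico, neg_sub_neg, two_mul]

lemma sqrt_sum_abs_add_sq_le {ι : Type*} [Fintype ι] {a : ℝ} (ha : 0 ≤ a)
    (y : EuclideanSpace ℝ ι) : √(∑ i, (|y i| + a) ^ 2) ≤ ‖y‖ + a * √(Fintype.card ι) := by
  have htriangle := norm_add_le (WithLp.toLp 2 fun i => |y i| : EuclideanSpace ℝ ι)
    (WithLp.toLp 2 fun _ => a)
  simpa [EuclideanSpace.norm_eq, sqrt_sq ha, mul_comm a] using htriangle

lemma ball_subset_biUnion_freqs (hR : 0 ≤ R) : Metric.ball (0 : 𝔼) (R - 5 * √N) ⊆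
    ⋃ q ∈ freqs N 4 R, box fun i => abs ⁻¹' Set.Ico ((q i : ℝ) - 1) (q i) := by
  intro y hy
  rw [mem_ball_zero_iff] at hy
  have hle : ∑ i, (|y i| + 5) ^ 2 ≤ R ^ 2 := by
    have hsqrt := sqrt_sum_abs_add_sq_le (a := 5) (by norm_num) y
    rw [Fintype.card_fin] at hsqrt
    exact (Real.sqrt_le_left hR).1 (by linarith)
  have hfloor (i : Fin N) := Nat.floor_le (abs_nonneg (y i))
  refine Set.mem_biUnion (x := fun i => ⌊|y i|⌋₊ + 1)
    ((mem_freqs (by norm_num) hR).2 ⟨fun i => by omega, ?_⟩) fun i => ⟨?_, ?_⟩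
  · refine hle.trans' (Finset.sum_le_sum fun i _ => ?_)
    push_cast
    exact pow_le_pow_left₀ (by positivity) (by linarith [hfloor i]) 2
  · simpa using hfloor i
  · simpa using Nat.lt_floor_add_one |y i|

lemma omegaBall_pos (N : ℕ) : 0 < omegaBall N :=
  ENNReal.toReal_pos (Metric.measure_ball_pos _ _ one_pos).ne' measure_ball_lt_top.ne

lemma volume_ball_le_card_freqs (hR : 0 ≤ R) :
    volume (Metric.ball (0 : 𝔼) (R - 5 * √N)) ≤ 2 ^ N * (freqs N 4 R).card := by
  have hcell (q : Fin N → ℕ) :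
      volume (box fun i => abs ⁻¹' Set.Ico ((q i : ℝ) - 1) (q i)) ≤ 2 ^ N := by
    rw [volume_box fun i => measurable_abs measurableSet_Ico]
    refine (Finset.prod_le_pow_card _ _ 2 fun i _ =>
      (volume_abs_preimage_Ico_le _ _).trans_eq (by simp)).trans_eq (by simp)
  calc volume (Metric.ball (0 : 𝔼) (R - 5 * √N))
      ≤ ∑ q ∈ freqs N 4 R, volume (box fun i => abs ⁻¹' Set.Ico ((q i : ℝ) - 1) (q i)) :=
        (measure_mono (ball_subset_biUnion_freqs hR)).trans (measure_biUnion_finset_le _ _)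
    _ ≤ (freqs N 4 R).card • 2 ^ N := Finset.sum_le_card_nsmul _ _ _ fun q _ => hcell q
    _ = 2 ^ N * (freqs N 4 R).card := by rw [nsmul_eq_mul, mul_comm]

lemma omegaBall_mul_le_card_freqs [NeZero N] (hR : 5 * √N ≤ R) :
    omegaBall N * (R - 5 * √N) ^ N ≤ 2 ^ N * (freqs N 4 R).card := by
  have hle := volume_ball_le_card_freqs (N := N) ((by positivity : 0 ≤ 5 * √N).trans hR)
  rw [Measure.addHaar_ball _ _ (sub_nonneg.2 hR), finrank_euclideanSpace_fin] at hle
  have hreal := ENNReal.toReal_mono (by finiteness) hle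
  rw [ENNReal.toReal_mul, ENNReal.toReal_ofReal (pow_nonneg (sub_nonneg.2 hR) N)] at hreal
  rw [mul_comm, omegaBall]
  simpa using hreal

lemma lamStar_le_of_card_freqs [NeZero N] (hR : 0 ≤ R) (hk : k ≤ (freqs N 4 R).card) :
    lamStar N k ≤ (π * R) ^ 4 := by
  have henlarge (η : ℝ) (hη : 0 < η) : lamStar N k ≤ (1 + 2 * η) ^ 4 * (π * R) ^ 4 := by
    set Ω : Set 𝔼 := box fun _ => Set.Ioo (-η) (1 + η)
    have hΩ : IsOpen Ω := isOpen_box fun _ => isOpen_Ioo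
    have hcube : closedUnitCube (Fin N) ⊆ Ω :=
      box_mono fun _ => Set.Icc_subset_Ioo (by linarith) (by linarith)
    have hvol : volume Ω = ENNReal.ofReal (1 + 2 * η) ^ N := by
      simp only [Ω, volume_box fun _ : Fin N => measurableSet_Ioo, Real.volume_Ioo,
        Finset.prod_const, Finset.card_univ, Fintype.card_fin]
      ring_nf
    have hscale := lamStar_mul_le (k := k) one_ne_zero hΩ
      ⟨0, fun i => ⟨by simpa using hη, by simp; linarith⟩⟩ (by rw [hvol]; finiteness)
    rw [one_mul, Nat.cast_one, one_mul, measureReal_def, hvol, ENNReal.toReal_pow,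
      ENNReal.toReal_ofReal (by positivity), ← rpow_natCast, ← rpow_mul (by positivity),
      mul_div_cancel₀ _ (NeZero.ne (N : ℝ))] at hscale
    refine hscale.trans ?_
    norm_cast
    exact mul_le_mul_of_nonneg_left (lamkN_le_of_card_freqs hR hk hΩ hcube) (by positivity)
  have hlim : Tendsto (fun η : ℝ => (1 + 2 * η) ^ 4 * (π * R) ^ 4) (nhdsWithin 0 (Set.Ioi 0))
      (nhds ((1 + 2 * 0) ^ 4 * (π * R) ^ 4)) :=
    (Continuous.tendsto (by fun_prop) 0).mono_left nhdsWithin_le_nhds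
  rw [mul_zero, add_zero, one_pow, one_mul] at hlim
  exact ge_of_tendsto hlim (eventually_nhdsWithin_of_forall henlarge)

lemma lamStar_le_mul_add_pow [NeZero N] (k : ℕ) :
    lamStar N k ≤ π ^ 4 * (2 * (k / omegaBall N) ^ ((1 : ℝ) / N) + 5 * √N) ^ 4 := by
  have hω := omegaBall_pos N
  set r := ((k : ℝ) / omegaBall N) ^ ((1 : ℝ) / N)
  have hr : 0 ≤ r := by positivity
  have hrN : omegaBall N * r ^ N = k := by
    rw [← rpow_natCast, ← rpow_mul (by positivity), one_div_mul_cancel (NeZero.ne (N : ℝ)),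
      rpow_one, mul_div_cancel₀ _ hω.ne']
  have hcard := omegaBall_mul_le_card_freqs (N := N) (R := 2 * r + 5 * √N) (by linarith)
  rw [add_sub_cancel_right, mul_pow, mul_left_comm, hrN] at hcard
  rw [← mul_pow]
  exact lamStar_le_of_card_freqs (by positivity)
    (by exact_mod_cast le_of_mul_le_mul_left hcard (by positivity))

end Counting

/-! ### Pólya bounds and the asymptotics of `lamStar` -/

section Polya

variable {N k : ℕ} {C : ℝ}

/-- The constant `16π⁴ / ω_N ^ (4 / N)` in Weyl's law for the biharmonic operator. -/
def weylConst (N : ℕ) : ℝ := 16 * π ^ 4 / omegaBall N ^ ((4 : ℝ) / N)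

/-- The Pólya type inequality `λ_k(Ω) ≥ C (k / |Ω|) ^ (4 / N)` for all `k ≥ 1` and all open sets of
finite positive measure. The generalized Pólya conjecture is the case `C = weylConst N`. -/
def PolyaBound (N : ℕ) (C : ℝ) : Prop :=
  ∀ k : ℕ, 1 ≤ k → ∀ Ω : Set (EuclideanSpace ℝ (Fin N)), IsOpen Ω → 0 < volume Ω → volume Ω < ⊤ →
    C * (k / volume.real Ω) ^ ((4 : ℝ) / N) ≤ lamkN N k Ω

lemma weylConst_mul_div_rpow {k V : ℝ} (hk : 0 ≤ k) (hV : 0 ≤ V) :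
    weylConst N * (k / V) ^ ((4 : ℝ) / N) =
      16 * π ^ 4 * (k / (omegaBall N * V)) ^ ((4 : ℝ) / N) := by
  rw [weylConst, mul_comm (omegaBall N), ← div_div, div_rpow _ (omegaBall_pos N).le, mul_div_assoc',
    div_mul_eq_mul_div]
  positivity

lemma PolyaBound.mul_rpow_le_lamStar (h : PolyaBound N C) (hk : 1 ≤ k) :
    C * (k : ℝ) ^ ((4 : ℝ) / N) ≤ lamStar N k := by
  refine le_csInf ⟨_, unitCube (Fin N), isOpen_unitCube, volume_unitCube, rfl⟩ ?_
  rintro _ ⟨Ω, hΩ, hvol, rfl⟩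
  simpa [measureReal_def, hvol] using h k hk Ω hΩ (by simp [hvol]) (by simp [hvol])

lemma polyaBound_of_tendsto_lamStar_div [NeZero N]
    (h : Tendsto (fun k : ℕ => lamStar N k / (k : ℝ) ^ ((4 : ℝ) / N)) atTop (nhds C)) :
    PolyaBound N C := by
  intro k hk Ω hΩ hpos hfin
  have hV : 0 < volume.real Ω := ENNReal.toReal_pos hpos.ne' hfin.ne
  have : (0 : ℝ) < k := by exact_mod_cast hk
  have hscaled (j : ℕ) (hj : j ≠ 0) : lamStar N (j * k) / ((j * k : ℕ) : ℝ) ^ ((4 : ℝ) / N) ≤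
      lamkN N k Ω / (k / volume.real Ω) ^ ((4 : ℝ) / N) := by
    have : (0 : ℝ) < j := by exact_mod_cast Nat.pos_of_ne_zero hj
    have hsplit : ((j * k : ℕ) : ℝ) = j * volume.real Ω * (k / volume.real Ω) := by
      push_cast
      field_simp
    rw [hsplit, mul_rpow (by positivity) (by positivity), ← div_div]
    gcongr
    rw [div_le_iff₀' (by positivity)]
    exact lamStar_mul_le hj hΩ (nonempty_of_measure_ne_zero hpos.ne') hfin.ne
  rw [← le_div_iff₀ (by positivity)]
  exact le_of_tendsto (h.comp (tendsto_id.atTop_mul_const' hk))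
    ((eventually_ne_atTop 0).mono hscaled)

lemma tendsto_mul_add_pow_div_weylConst [NeZero N] (b : ℝ) :
    Tendsto (fun k : ℕ => π ^ 4 * (2 * (k / omegaBall N) ^ ((1 : ℝ) / N) + b) ^ 4 /
      (k : ℝ) ^ ((4 : ℝ) / N)) atTop (nhds (weylConst N)) := by
  have hω := omegaBall_pos N
  have hroot : Tendsto (fun k : ℕ => (k : ℝ) ^ ((1 : ℝ) / N)) atTop atTop :=
    (tendsto_rpow_atTop (by have := NeZero.pos N; positivity)).comp tendsto_natCast_atTop_atTop
  have hlim : Tendsto (fun k : ℕ => π ^ 4 * (2 / omegaBall N ^ ((1 : ℝ) / N) +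
      b / (k : ℝ) ^ ((1 : ℝ) / N)) ^ 4) atTop
      (nhds (π ^ 4 * (2 / omegaBall N ^ ((1 : ℝ) / N) + 0) ^ 4)) :=
    ((tendsto_const_nhds.add (hroot.const_div_atTop b)).pow 4).const_mul _
  have hval : weylConst N = π ^ 4 * (2 / omegaBall N ^ ((1 : ℝ) / N) + 0) ^ 4 := by
    rw [weylConst, rpow_four_div hω.le, add_zero, div_pow]
    ring
  rw [hval]
  refine hlim.congr' ((eventually_gt_atTop 0).mono fun k hk => ?_)
  have hk0 : (0 : ℝ) < k := by exact_mod_cast hk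
  beta_reduce
  rw [div_rpow hk0.le hω.le, rpow_four_div hk0.le, mul_div_assoc, ← div_pow]
  field_simp

lemma PolyaBound.tendsto_lamStar_div [NeZero N] (h : PolyaBound N (weylConst N)) :
    Tendsto (fun k : ℕ => lamStar N k / (k : ℝ) ^ ((4 : ℝ) / N)) atTop (nhds (weylConst N)) := by
  refine tendsto_of_tendsto_of_tendsto_of_le_of_le' tendsto_const_nhds
    (tendsto_mul_add_pow_div_weylConst (5 * √N)) ?_ (.of_forall fun k => ?_)
  · filter_upwards [eventually_ge_atTop 1] with k hk
    have : (0 : ℝ) < k := by exact_mod_cast hk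
    exact (le_div_iff₀ (by positivity)).2 (h.mul_rpow_le_lamStar hk)
  · gcongr
    exact lamStar_le_mul_add_pow k

theorem generalized_polya_iff_asymptotics_general (N : ℕ) [NeZero N] :
    (∀ k : ℕ, 1 ≤ k → ∀ Ω : Set (EuclideanSpace ℝ (Fin N)), IsOpen Ω →
      0 < volume Ω → volume Ω < ⊤ →
      lamkN N k Ω ≥
        16 * π ^ 4 * ((k : ℝ) / (omegaBall N * (volume Ω).toReal)) ^ ((4 : ℝ) / N)) ↔
    Filter.Tendsto (fun k : ℕ => lamStar N k / (k : ℝ) ^ ((4 : ℝ) / N))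
      Filter.atTop (nhds (16 * π ^ 4 / (omegaBall N) ^ ((4 : ℝ) / N))) := by
  simp only [← weylConst_mul_div_rpow (Nat.cast_nonneg _) ENNReal.toReal_nonneg]
  exact ⟨PolyaBound.tendsto_lamStar_div, polyaBound_of_tendsto_lamStar_div⟩

end Polya

/-- Equivalence of the generalized Pólya conjecture for the Dirichlet
biharmonic operator with the asymptotic behaviour of the minimal eigenvalues:
(i) `λ_k(Ω) ≥ 16π⁴(k/(ω_N|Ω|))^{4/N}` for all `k ≥ 1` and all open `Ω` of
finite positive measure, iff (ii) `λ_k*/k^{4/N} → 16π⁴/ω_N^{4/N}`. -/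
theorem generalized_polya_iff_asymptotics (N : ℕ) (hN : 2 ≤ N) :
    (∀ k : ℕ, 1 ≤ k → ∀ Ω : Set (EuclideanSpace ℝ (Fin N)), IsOpen Ω →
      0 < volume Ω → volume Ω < ⊤ →
      lamkN N k Ω ≥
        16 * π ^ 4 * ((k : ℝ) / (omegaBall N * (volume Ω).toReal)) ^ ((4 : ℝ) / N)) ↔
    Filter.Tendsto (fun k : ℕ => lamStar N k / (k : ℝ) ^ ((4 : ℝ) / N))
      Filter.atTop (nhds (16 * π ^ 4 / (omegaBall N) ^ ((4 : ℝ) / N))) :=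
  haveI : NeZero N := ⟨by omega⟩
  generalized_polya_iff_asymptotics_general N
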